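/- Let f_1, …, f_n be C^∞ self-maps of compact intervals, each with nonzero topological entropy h_top(f_i) > 0. Then the Cartesian product f_1 × … × f_n, a C^∞ self-map of the product manifold (a compact n-dimensional cube), is entropy-expanding. -/

import Mathlib

open Set Filter Topology MeasureTheory
open scoped Manifold ENNReal NNReal RealInnerProductSpace

noncomputable section

/-! ### Euclidean spaces and unit cubes -/

abbrev Euc (n : ℕ) : Type := EuclideanSpace ℝ (Fin n)

def unitCube (k : ℕ) : Set (Euc k) := {t | ∀ i, |t i| ≤ 1}

/-! ### Bowen–Dinaburg covering numbers and topological entropies -/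

section MetricDyn

variable {X : Type*} [MetricSpace X]

/-- The `(ε,n)`-dynamical ball centered at `x`. -/
def dynBall (f : X → X) (ε : ℝ) (n : ℕ) (x : X) : Set X :=
  {y | ∀ m, m < n → dist (f^[m] y) (f^[m] x) < ε}

/-- The `(ε,n)`-covering number of `S`: minimal number of `(ε,n)`-dynamical balls
centered at points of `S` needed to cover `S` (`⊤` if there is no finite cover). -/
def coverNum (f : X → X) (ε : ℝ) (n : ℕ) (S : Set X) : ℕ∞ :=
  sInf {m : ℕ∞ | ∃ F : Finset X, ↑F ⊆ S ∧ (S ⊆ ⋃ x ∈ F, dynBall f ε n x) ∧ m = F.card}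

/-- Logarithm on `ℕ∞`. -/
def elog : ℕ∞ → EReal := WithTop.recTopCoe ⊤ (fun k : ℕ => ((Real.log k : ℝ) : EReal))

/-- Topological entropy of the subset `S` (Bowen–Dinaburg):
`lim_{ε→0} limsup_n (1/n) log r_f(ε,n,S)`, the limit being a supremum by monotonicity. -/
def entSet (f : X → X) (S : Set X) : EReal :=
  ⨆ ε : {ε : ℝ // 0 < ε},
    Filter.atTop.limsup fun n : ℕ => (((n : ℝ)⁻¹ : ℝ) : EReal) * elog (coverNum f (ε : ℝ) n S)

/-- Topological entropy of `f`. -/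
def htop (f : X → X) : EReal := entSet f Set.univ

/-- Topological entropy of a collection of subsets: `sup_{D ∈ 𝓓} h_top(f,D)`. -/
def entColl (f : X → X) (D : Set (Set X)) : EReal := ⨆ S ∈ D, entSet f S

def supCoverNum (f : X → X) (ε : ℝ) (n : ℕ) (D : Set (Set X)) : ℕ∞ :=
  ⨆ S ∈ D, coverNum f ε n S

/-- Uniform topological entropy of a collection of subsets. -/
def unifEntColl (f : X → X) (D : Set (Set X)) : EReal :=
  ⨆ ε : {ε : ℝ // 0 < ε},
    Filter.atTop.limsup fun n : ℕ =>
      (((n : ℝ)⁻¹ : ℝ) : EReal) * elog (supCoverNum f (ε : ℝ) n D)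

/-- Lipschitz constant of `f` (as an extended nonnegative real). -/
def lipConst (f : X → X) : ℝ≥0∞ := ⨆ (x : X) (y : X), edist (f x) (f y) / edist x y

/-- `log Lip(f)`. -/
def logLip (f : X → X) : EReal := ENNReal.log (lipConst f)

/-- `lip(f) = max (log Lip f) 0`. -/
def lipPlus (f : X → X) : EReal := max (logLip f) 0

/-- Number of fixed points of `f^n`. -/
def periodicCount (f : X → X) (n : ℕ) : ℕ∞ := ENat.card {x : X // f^[n] x = x}

/-- The periodic points of `f` satisfy a multiplicative lower bound:
for some `p ≥ 1`, `liminf_{n→∞, p∣n} e^{-n h_top(f)} #{x : f^n x = x} > 0`. -/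
def MultLowerBound (f : X → X) : Prop :=
  ∃ p : ℕ, 1 ≤ p ∧
    0 < Filter.liminf
      (fun n : ℕ => ENNReal.ofReal (Real.exp (-(n : ℝ) * (htop f).toReal)) *
        (periodicCount f n : ℝ≥0∞))
      (Filter.atTop ⊓ Filter.principal {n : ℕ | p ∣ n})

end MetricDyn

/-! ### Measure-theoretic (Kolmogorov–Sinai) entropy -/

section MeasDyn

variable {X : Type*} [MeasurableSpace X]

/-- A finite measurable partition of `X`, indexed by `Fin N`. -/
def IsMeasPartition {N : ℕ} (P : Fin N → Set X) : Prop :=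
  (∀ i, MeasurableSet (P i)) ∧ Pairwise (Function.onFun Disjoint P) ∧ (⋃ i, P i) = Set.univ

/-- Entropy of the `n`-th dynamical refinement of the partition `P`. -/
def dynHn (f : X → X) (μ : Measure X) {N : ℕ} (P : Fin N → Set X) (n : ℕ) : ℝ :=
  ∑ a : Fin n → Fin N,
    Real.negMulLog (μ (⋂ i : Fin n, f^[(i : ℕ)] ⁻¹' P (a i))).toReal

/-- Kolmogorov–Sinai entropy of `μ`:
`sup_P lim_n (1/n) H(⋁_{i<n} f^{-i} P) = sup_P inf_{n>0} (1/n) H_n(P)`. -/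
def ksEntropy (f : X → X) (μ : Measure X) : EReal :=
  ⨆ (N : ℕ) (P : Fin N → Set X) (_ : IsMeasPartition P),
    ((⨅ n : {n : ℕ // 0 < n}, dynHn f μ P (n : ℕ) / (n : ℝ) : ℝ) : EReal)

/-- An invariant Borel probability measure. -/
def IsInvariantProb (f : X → X) (μ : Measure X) : Prop :=
  IsProbabilityMeasure μ ∧ MeasurePreserving f μ μ

/-- A maximum measure : an ergodic invariant probability measure whose entropy
realizes the supremum of the entropies of all invariant probability measures. -/
def IsMaxMeasure (f : X → X) (μ : Measure X) : Prop :=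
  IsInvariantProb f μ ∧ Ergodic f μ ∧
    ∀ ν : Measure X, IsInvariantProb f ν → ksEntropy f ν ≤ ksEntropy f μ

end MeasDyn

/-! ### C^r sizes on a manifold, singular disks, dimensional entropies -/

/-- A `C^r` size on `M`, given by a finite atlas of `C^r`-compatible charts. -/
structure CrAtlasSize (r : ℕ∞) (d : ℕ) (M : Type*) [TopologicalSpace M]
    [ChartedSpace (Euc d) M] : Type _ where
  num : ℕ
  chart : Fin num → PartialHomeomorph M (Euc d)
  covers : ∀ x : M, ∃ i, x ∈ (chart i).source
  smooth_to : ∀ i, ContMDiffOn (𝓡 d) (𝓡 d) r (chart i) (chart i).source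
  smooth_symm : ∀ i, ContMDiffOn (𝓡 d) (𝓡 d) r (chart i).symm (chart i).target

section ManifoldDefs

variable {d : ℕ} {M : Type*} [TopologicalSpace M] [ChartedSpace (Euc d) M] {ρ : ℕ∞}

/-- The `C^s` size (finite `s`) of a parametrized disk `φ : Q^k → M`:
sup over points of the cube, inf over charts containing the image point, of the
maximal norm of the derivatives of order `≤ s` of the coordinate expressions. -/
def sizeNat (A : CrAtlasSize ρ d M) (s : ℕ) {k : ℕ} (φ : Euc k → M) : ℝ≥0∞ :=
  ⨆ t ∈ unitCube k,
    ⨅ i ∈ {i | φ t ∈ (A.chart i).source},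
      ⨆ j ∈ Finset.range (s + 1),
        (‖iteratedFDeriv ℝ j (fun u => A.chart i (φ u)) t‖₊ : ℝ≥0∞)

/-- The `C^s` size for `s ∈ ℕ∞`; for `s = ∞` it is the supremum of the finite sizes. -/
def diskSize (A : CrAtlasSize ρ d M) (s : ℕ∞) {k : ℕ} (φ : Euc k → M) : ℝ≥0∞ :=
  ⨆ j : {j : ℕ // (j : ℕ∞) ≤ s}, sizeNat A (j : ℕ) φ

/-- A `C^r` singular `k`-disk: a map `Q^k → M` which is `C^r` on a neighborhood
of the cube. -/
def IsCrDisk (d : ℕ) {M : Type*} [TopologicalSpace M] [ChartedSpace (Euc d) M]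
    (rr : ℕ∞) (k : ℕ) (φ : Euc k → M) : Prop :=
  ∃ U : Set (Euc k), IsOpen U ∧ unitCube k ⊆ U ∧ ContMDiffOn (𝓡 k) (𝓡 d) rr φ U

/-- The standard uniform family: all `C^r` singular `k`-disks of `C^r` size `≤ 1`. -/
def uniformDiskMaps (A : CrAtlasSize ρ d M) (rr : ℕ∞) (k : ℕ) : Set (Euc k → M) :=
  {φ | IsCrDisk d rr k φ ∧ diskSize A rr φ ≤ 1}

/-- The images `φ(Q^k)` of a family of parametrized disks. -/
def diskImages {k : ℕ} (D : Set (Euc k → M)) : Set (Set M) :=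
  (fun φ => φ '' unitCube k) '' D

end ManifoldDefs

section ManifoldEnt

variable {d : ℕ} {M : Type*} [MetricSpace M] [ChartedSpace (Euc d) M] {ρ : ℕ∞}

/-- `H^{k,C^r}_top(f)`: the uniform `C^r` `k`-dimensional entropy of `f`
(w.r.t. the `C^r` size `A`). For `rr = ⊤` this is `H^k_top(f)`. -/
def Hknt (A : CrAtlasSize ρ d M) (rr : ℕ∞) (k : ℕ) (f : M → M) : EReal :=
  unifEntColl f (diskImages (uniformDiskMaps A rr k))

/-- `h^{k,C^r}_top(f)`: the `C^r` `k`-dimensional entropy of `f`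
(supremum of the entropies of all `C^r` singular `k`-disks). -/
def hknt (rr : ℕ∞) (k : ℕ) (f : M → M) : EReal :=
  entColl f (diskImages {φ : Euc k → M | IsCrDisk d rr k φ})

/-- The unstable (entropy) dimension `d_u(f) = min {k : H^k_top(f) = h_top(f)}`. -/
def duDim (A : CrAtlasSize ρ d M) (f : M → M) : ℕ :=
  sInf {k : ℕ | Hknt A ⊤ k f = htop f}

/-- The stable dimension `d_s(f) = d_u(f⁻¹)` if `f` is a `C^r` diffeomorphism, `0` else. -/
def dsDim (A : CrAtlasSize ρ d M) (rr : ℕ∞) (f : M → M) : ℕ :=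
  letI : ∀ p : Prop, Decidable p := Classical.propDecidable
  if h : ∃ g : M → M, ContMDiff (𝓡 d) (𝓡 d) rr g ∧
      Function.LeftInverse g f ∧ Function.RightInverse g f
  then duDim A h.choose else 0

/-- `f` is entropy-expanding: `H^{d-1}_top(f) < h_top(f)`. -/
def EntropyExpanding (A : CrAtlasSize ρ d M) (f : M → M) : Prop :=
  Hknt A ⊤ (d - 1) f < htop f

/-- `f` is entropy-hyperbolic: `d_u(f) + d_s(f) = d`. -/
def EntropyHyperbolic (A : CrAtlasSize ρ d M) (rr : ℕ∞) (f : M → M) : Prop :=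
  duDim A f + dsDim A rr f = d

end ManifoldEnt

/-! ### Resolutions and resolution entropies -/

/-- `C^r` size of a self-map of `Q^k` (Euclidean version). -/
def eucMapSize (r : ℕ) {k : ℕ} (ψ : Euc k → Euc k) : ℝ≥0∞ :=
  ⨆ t ∈ unitCube k, ⨆ j ∈ Finset.range (r + 1), (‖iteratedFDeriv ℝ j ψ t‖₊ : ℝ≥0∞)

/-- `Ψ_ω = ψ_{σ^{|ω|-1}ω} ∘ ⋯ ∘ ψ_ω` where `σ` is the shift (tail) on words. -/
def bigPsi {k : ℕ} (ψ : List ℕ → Euc k → Euc k) : List ℕ → Euc k → Euc k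
  | [] => id
  | a :: w => bigPsi ψ w ∘ ψ (a :: w)

/-- The data of a candidate resolution: a finite set of words and maps `Q^k → Q^k`. -/
structure ResolutionData (k : ℕ) where
  words : Finset (List ℕ)
  map : List ℕ → Euc k → Euc k

section Resolutions

variable {d : ℕ} {M : Type*} [TopologicalSpace M] [ChartedSpace (Euc d) M] {ρ : ℕ∞}

/-- `R` is a `C^r`-resolution of order `n` of the singular disk `φ` (for the map `f`). -/
def IsResolution (A : CrAtlasSize ρ d M) (rr : ℕ) (f : M → M) {k : ℕ}
    (φ : Euc k → M) (n : ℕ) (R : ResolutionData k) : Prop :=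
  (∀ ω ∈ R.words, ω ≠ [] ∧ ω.length ≤ n) ∧
  (∀ ω ∈ R.words, ω.tail ≠ [] → ω.tail ∈ R.words) ∧
  (∀ ω ∈ R.words, ContDiff ℝ (rr : ℕ∞) (R.map ω) ∧
      Set.MapsTo (R.map ω) (unitCube k) (unitCube k) ∧ eucMapSize rr (R.map ω) ≤ 1) ∧
  (∀ ω ∈ R.words, diskSize A (rr : ℕ∞) (f^[ω.length] ∘ φ ∘ bigPsi R.map ω) ≤ 1) ∧
  unitCube k ⊆ ⋃ ω ∈ R.words.filter (fun ω => ω.length = n), bigPsi R.map ω '' unitCube k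

/-- The size of a resolution: the number of words of length `n`. -/
def resSize (n : ℕ) {k : ℕ} (R : ResolutionData k) : ℕ :=
  (R.words.filter fun ω => ω.length = n).card

/-- `R_f(C^r, n, φ)`: minimal size of a `C^r`-resolution of order `n` of `φ`. -/
def resNum (A : CrAtlasSize ρ d M) (rr : ℕ) (f : M → M) (n : ℕ) {k : ℕ}
    (φ : Euc k → M) : ℕ∞ :=
  sInf {m : ℕ∞ | ∃ R : ResolutionData k, IsResolution A rr f φ n R ∧ m = resSize n R}

/-- `R_f(C^r, n, D)` for a family `D` of disks. -/
def supResNum (A : CrAtlasSize ρ d M) (rr : ℕ) (f : M → M) (n : ℕ) {k : ℕ}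
    (D : Set (Euc k → M)) : ℕ∞ :=
  ⨆ φ ∈ D, resNum A rr f n φ

/-- Resolution entropy of a single disk. -/
def hResDisk (A : CrAtlasSize ρ d M) (rr : ℕ) (f : M → M) {k : ℕ} (φ : Euc k → M) : EReal :=
  Filter.atTop.limsup fun n : ℕ => (((n : ℝ)⁻¹ : ℝ) : EReal) * elog (resNum A rr f n φ)

/-- `h_{R,C^r}(f,D)`: resolution entropy of a family of disks. -/
def hResColl (A : CrAtlasSize ρ d M) (rr : ℕ) (f : M → M) {k : ℕ}
    (D : Set (Euc k → M)) : EReal :=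
  ⨆ φ ∈ D, hResDisk A rr f φ

/-- `H_{R,C^r}(f,D)`: uniform resolution entropy of a family of disks. -/
def HResColl (A : CrAtlasSize ρ d M) (rr : ℕ) (f : M → M) {k : ℕ}
    (D : Set (Euc k → M)) : EReal :=
  Filter.atTop.limsup fun n : ℕ => (((n : ℝ)⁻¹ : ℝ) : EReal) * elog (supResNum A rr f n D)

end Resolutions

/-! ### C^N closeness of maps (basis of the C^r topologies) -/

section Closeness

variable {d : ℕ} {M : Type*} [MetricSpace M] [ChartedSpace (Euc d) M] {ρ : ℕ∞}

/-- `g` is `δ`-close to `f` in the `C^N` sense, w.r.t. the finite atlas of `A`: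
uniformly `δ`-close, and with all derivatives of order `≤ N` of the coordinate
expressions `δ`-close wherever both are defined. -/
def CrClose (A : CrAtlasSize ρ d M) (N : ℕ) (δ : ℝ) (f g : M → M) : Prop :=
  (∀ x : M, dist (f x) (g x) < δ) ∧
  ∀ i j, ∀ t ∈ (A.chart i).target,
    f ((A.chart i).symm t) ∈ (A.chart j).source →
    g ((A.chart i).symm t) ∈ (A.chart j).source →
    ∀ s ≤ N,
      ‖iteratedFDeriv ℝ s (fun u => A.chart j (f ((A.chart i).symm u))) t
        - iteratedFDeriv ℝ s (fun u => A.chart j (g ((A.chart i).symm u))) t‖ < δ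

end Closeness

/-! ### Horseshoes -/

/-- The full two-sided shift on `N` symbols. -/
def fullShift (N : ℕ) : (ℤ → Fin N) → (ℤ → Fin N) := fun x i => x (i + 1)

/-- `Λ` is a horseshoe for `f`: a compact invariant set on which some iterate of `f`
is topologically conjugate to a full shift on finitely many symbols. -/
def IsHorseshoe {X : Type*} [MetricSpace X] (f : X → X) (Λ : Set X) : Prop :=
  IsCompact Λ ∧ f '' Λ = Λ ∧
  ∃ (m N : ℕ), 1 ≤ m ∧ 1 ≤ N ∧
    ∃ e : Λ ≃ₜ (ℤ → Fin N),
      ∀ x y : Λ, (y : X) = f^[m] (x : X) → e y = fullShift N (e x)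

/-- Identification of tangent vectors with Euclidean vectors. -/
def tanEuc {d : ℕ} {M : Type*} [TopologicalSpace M] [ChartedSpace (Euc d) M] {x : M}
    (v : TangentSpace (𝓡 d) x) : Euc d := v

end
noncomputable section


/-- The family of images of `C^∞` singular `k`-disks of size `≤ 1` inside a compact
set `K` of Euclidean `n`-space (here the identity chart serves as atlas). -/
def cubeFamily (n k : ℕ) (K : Set (Euc n)) : Set (Set ↥K) :=
  {S | ∃ φ : Euc k → Euc n,
    (∃ U : Set (Euc k), IsOpen U ∧ unitCube k ⊆ U ∧ ContDiffOn ℝ (⊤ : ℕ∞) φ U) ∧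
    (∀ s : ℕ, 1 ≤ s → ∀ t ∈ unitCube k, ‖iteratedFDeriv ℝ s φ t‖ ≤ 1) ∧
    (∀ t ∈ unitCube k, φ t ∈ K) ∧
    S = {x : ↥K | ∃ t ∈ unitCube k, φ t = (x : Euc n)}}

/-- `H^k_top` of a self-map of a compact subset `K ⊆ ℝ^n`. -/
def HkCube (n k : ℕ) {K : Set (Euc n)} (F : ↥K → ↥K) : EReal :=
  unifEntColl F (cubeFamily n k K)

/-!
Let `h i` be the topological entropy of `f i`. The strict inequality comes from
`H^{n-1}_top(F) ≤ ∑ h i - min h i < ∑ h i ≤ h_top(F)`; the last step multiplies separated sets.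

For the first one, smoothness gives `∫ |(f i ^ m)'| ≤ C e ^ {m (h i + δ)}` as in Yomdin's theory.
Cutting each interval into pieces of equal mass for `1 + ∑_{s < m} |(f i ^ s)'|` therefore gives a
grid of the cube whose cells stay small for `m` iterates, with about `e ^ {m (h i + δ)}` steps in
the `i`-th direction. By Taylor's formula, up to an error `e ^ {-Cm}`, a disk of size at most `1` is
the image of a polynomial map of degree `m + O(1)`. Since `n` polynomials in `n - 1` variables are
algebraically dependent, this image lies in a hypersurface of degree polynomial in `m`, and such a
hypersurface meets few cells: their number is polynomial in `m` times the number of cells in the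
largest coordinate hyperplane, which omits the direction of smallest entropy.
-/

/-! ### Polynomial relations of controlled degree -/

section PolynomialRelations

open MvPolynomial

variable {R σ τ : Type*}

theorem eval_aeval [CommSemiring R] (x : τ → R) (P : σ → MvPolynomial τ R)
    (A : MvPolynomial σ R) :
    eval x (aeval P A) = eval (fun i => eval x (P i)) A := by
  simpa only [aeval_eq_eval] using comp_aeval_apply P (aeval x) A

theorem totalDegree_aeval_le [CommSemiring R] {P : σ → MvPolynomial τ R} {d : ℕ}
    (hP : ∀ i, (P i).totalDegree ≤ d) (A : MvPolynomial σ R) :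
    (aeval P A).totalDegree ≤ A.totalDegree * d := by
  rw [aeval_def, eval₂_eq]
  refine totalDegree_finsetSum_le fun s hs => ?_
  calc (algebraMap R (MvPolynomial τ R) (coeff s A) * ∏ i ∈ s.support, P i ^ s i).totalDegree
      ≤ 0 + ∑ i ∈ s.support, (P i ^ s i).totalDegree := by
        refine (totalDegree_mul _ _).trans (add_le_add ?_ (totalDegree_finsetProd _ _))
        rw [algebraMap_eq, totalDegree_C]
    _ ≤ ∑ i ∈ s.support, s i * d := by
        rw [zero_add]
        exact Finset.sum_le_sum fun i _ =>
          (totalDegree_pow _ _).trans (Nat.mul_le_mul_left _ (hP i))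
    _ = (s.sum fun _ e => e) * d := by rw [Finsupp.sum, Finset.sum_mul]
    _ ≤ A.totalDegree * d := Nat.mul_le_mul_right _ (le_totalDegree hs)

theorem totalDegree_pderiv_le [CommSemiring R] (i : σ) (p : MvPolynomial σ R) :
    (pderiv i p).totalDegree ≤ p.totalDegree := by
  conv_lhs => rw [p.as_sum, map_sum]
  refine totalDegree_finsetSum_le fun s hs => ?_
  rw [pderiv_monomial]
  refine (totalDegree_monomial_le _ _).trans (le_trans ?_ (le_totalDegree hs))
  exact Finsupp.degree_mono tsub_le_self

theorem totalDegree_le_of_mem_restrictDegree [CommSemiring R] [Fintype σ] {E : ℕ}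
    {A : MvPolynomial σ R} (hA : A ∈ restrictDegree σ R E) :
    A.totalDegree ≤ Fintype.card σ * E := by
  rw [totalDegree]
  refine Finset.sup_le fun s hs => ?_
  calc (s.sum fun _ e => e) = ∑ i, s i := Finsupp.sum_fintype _ _ fun _ => rfl
    _ ≤ ∑ _i : σ, E := Finset.sum_le_sum fun i _ => (mem_restrictDegree _ _ _).1 hA s hs i
    _ = Fintype.card σ * E := by simp

theorem finrank_restrictDegree (σ R : Type*) [Fintype σ] [CommRing R] [Nontrivial R] (m : ℕ) :
    Module.finrank R (restrictDegree σ R m) = (m + 1) ^ Fintype.card σ := by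
  classical
  have e : {s : σ →₀ ℕ | ∀ i, s i ≤ m} ≃ (σ → Fin (m + 1)) :=
    { toFun := fun s i => ⟨s.1 i, Nat.lt_succ_of_le (s.2 i)⟩
      invFun := fun v => ⟨Finsupp.equivFunOnFinite.symm fun i => (v i : ℕ), fun i => by
        simpa using Nat.le_of_lt_succ (v i).2⟩
      left_inv := fun s => by ext i; simp
      right_inv := fun v => by ext i; simp }
  have b := (basisRestrictSupport R {s : σ →₀ ℕ | ∀ i, s i ≤ m}).reindex e
  exact (Module.finrank_eq_card_basis b).trans (by simp)

theorem exists_ne_zero_aeval_eq_zero [Field R] [Fintype σ] [Fintype τ]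
    {P : σ → MvPolynomial τ R} {d E : ℕ} (hP : ∀ i, (P i).totalDegree ≤ d)
    (hE : (Fintype.card σ * E * d + 1) ^ Fintype.card τ < (E + 1) ^ Fintype.card σ) :
    ∃ A ∈ restrictDegree σ R E, A ≠ 0 ∧ aeval P A = 0 := by
  have hmaps : ∀ A ∈ restrictDegree σ R E,
      (aeval P).toLinearMap A ∈ restrictDegree τ R (Fintype.card σ * E * d) := fun A hA =>
    restrictTotalDegree_le_restrictDegree _ _ _ <| (mem_restrictTotalDegree _ _ _).2 <|
      (totalDegree_aeval_le hP A).trans <|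
        Nat.mul_le_mul_right _ (totalDegree_le_of_mem_restrictDegree hA)
  have hker : LinearMap.ker ((aeval P).toLinearMap.restrict hmaps) ≠ ⊥ := by
    apply LinearMap.ker_ne_bot_of_finrank_lt
    rwa [finrank_restrictDegree, finrank_restrictDegree]
  obtain ⟨A, hA, hA0⟩ := Submodule.exists_mem_ne_zero_of_ne_bot hker
  exact ⟨A, A.2, Subtype.coe_ne_coe.2 hA0, congrArg Subtype.val (LinearMap.mem_ker.1 hA)⟩

theorem exists_ne_zero_aeval_eq_zero_fin [Field R] {k d : ℕ}
    {P : Fin (k + 1) → MvPolynomial (Fin k) R} (hP : ∀ i, (P i).totalDegree ≤ d) :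
    ∃ A ∈ restrictDegree (Fin (k + 1)) R (((k + 1) * d + 1) ^ k), A ≠ 0 ∧ aeval P A = 0 := by
  apply exists_ne_zero_aeval_eq_zero hP
  set E := ((k + 1) * d + 1) ^ k
  rw [Fintype.card_fin, Fintype.card_fin]
  calc ((k + 1) * E * d + 1) ^ k ≤ (((k + 1) * d + 1) * (E + 1)) ^ k := by
        gcongr; nlinarith [Nat.zero_le E, Nat.zero_le ((k + 1) * d)]
    _ = E * (E + 1) ^ k := mul_pow _ _ _
    _ < (E + 1) * (E + 1) ^ k := by gcongr; exact Nat.lt_succ_self E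
    _ = (E + 1) ^ (k + 1) := by ring

end PolynomialRelations

/-! ### Critical points of polynomials -/

section CriticalPoints

open MvPolynomial

theorem hasDerivAt_eval_update {𝕜 σ : Type*} [NontriviallyNormedField 𝕜] [DecidableEq σ]
    (H : MvPolynomial σ 𝕜) (x : σ → 𝕜) (i : σ) (t : 𝕜) :
    HasDerivAt (fun t => eval (Function.update x i t) H)
      (eval (Function.update x i t) (pderiv i H)) t := by
  induction H using MvPolynomial.induction_on with
  | C a => simpa using hasDerivAt_const t a
  | add p q hp hq => simpa only [map_add] using hp.fun_add hq
  | mul_X p j hp =>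
    have hX : HasDerivAt (fun t => Function.update x i t j) (Pi.single (M := fun _ => 𝕜) i 1 j) t :=
      hasDerivAt_pi.1 (hasDerivAt_update x i t) j
    have hj : eval (Function.update x i t) (Pi.single (M := fun _ => MvPolynomial σ 𝕜) i 1 j) =
        Pi.single (M := fun _ => 𝕜) i 1 j := by
      obtain rfl | hne := eq_or_ne j i <;> simp [*]
    simpa [Derivation.leibniz, pderiv_X, hj, mul_comm, add_comm] using hp.fun_mul hX

theorem eval_pderiv_eq_zero_of_isLocalMin {σ : Type*} {H : MvPolynomial σ ℝ}
    {y : σ → ℝ} (h : IsLocalMin (fun x => eval x H) y) (i : σ) : eval y (pderiv i H) = 0 := by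
  classical
  have hline : IsLocalMin (fun t => eval (Function.update y i t) H) (y i) := by
    have hcont : ContinuousAt (fun t => Function.update y i t) (y i) := by fun_prop
    have := hcont.tendsto
    rw [Function.update_eq_self] at this
    simpa only [IsLocalMin, IsMinFilter, Function.update_eq_self] using this.eventually h
  simpa only [Function.update_eq_self] using
    hline.hasDerivAt_eq_zero (hasDerivAt_eval_update H y i (y i))

/-- The point is a minimiser of `G² - v · x` on `K`: for small `v` it cannot lie on the frontier. -/
theorem exists_mem_interior_eval_pderiv_sq_eq {σ : Type*} [Finite σ] (G : MvPolynomial σ ℝ)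
    {K : Set (σ → ℝ)} (hK : IsCompact K) (hzero : ∃ x ∈ K, eval x G = 0)
    (hfrontier : ∀ x ∈ frontier K, eval x G ≠ 0) :
    ∀ᶠ v in 𝓝 (0 : σ → ℝ), ∃ x ∈ interior K, ∀ i, eval x (pderiv i (G ^ 2)) = v i := by
  have := Fintype.ofFinite σ
  obtain ⟨x₀, hx₀, hGx₀⟩ := hzero
  have hfc : IsCompact (frontier K) :=
    hK.of_isClosed_subset isClosed_frontier hK.isClosed.frontier_subset
  obtain ⟨μ, hμ, hμG⟩ := hfc.exists_forall_le' (continuous_eval (G ^ 2)).continuousOn (a := 0)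
    fun x hx => by rw [map_pow]; exact sq_pos_of_ne_zero (hfrontier x hx)
  set R : ℝ := Fintype.card σ * Metric.diam K
  have : 0 ≤ R := by positivity
  filter_upwards [Metric.ball_mem_nhds 0 (show 0 < μ / (R + 1) by positivity)] with v hv
  rw [mem_ball_zero_iff] at hv
  set H : MvPolynomial σ ℝ := G ^ 2 - ∑ j, C (v j) * X j with hH
  have evalH : ∀ x, eval x H = eval x (G ^ 2) - ∑ j, v j * x j := fun x => by simp [hH]
  have hlt : ∀ y ∈ K \ interior K, eval x₀ H < eval y H := fun y hy => by
    have hlin : ∑ j, v j * (y j - x₀ j) ≤ μ / (R + 1) * R := by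
      calc ∑ j, v j * (y j - x₀ j) ≤ ∑ _j : σ, μ / (R + 1) * Metric.diam K := by
            refine Finset.sum_le_sum fun j _ => (le_abs_self _).trans ?_
            rw [abs_mul]
            gcongr
            · exact (norm_le_pi_norm v j).trans hv.le
            · exact (dist_le_pi_dist y x₀ j).trans
                (Metric.dist_le_diam_of_mem hK.isBounded hy.1 hx₀)
        _ = μ / (R + 1) * R := by rw [Finset.sum_const, Finset.card_univ, nsmul_eq_mul]; ring
    have hμR : μ / (R + 1) * R < μ := by
      rw [div_mul_eq_mul_div, div_lt_iff₀ (by positivity)]; nlinarith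
    have hy' : μ ≤ eval y (G ^ 2) := hμG y (hK.isClosed.frontier_eq ▸ hy)
    simp only [mul_sub, Finset.sum_sub_distrib] at hlin
    rw [evalH, evalH, map_pow, hGx₀]
    linarith
  obtain ⟨y, hy, hmin⟩ := hK.exists_isLocalMin_mem_open interior_subset
    (continuous_eval H).continuousOn hx₀ hlt isOpen_interior
  refine ⟨y, hy, fun i => ?_⟩
  have hcrit := eval_pderiv_eq_zero_of_isLocalMin hmin i
  have hpderiv : pderiv i H = pderiv i (G ^ 2) - C (v i) := by
    classical
    simp [hH, Derivation.leibniz, pderiv_X, Pi.single_apply]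
  rw [hpderiv, map_sub, eval_C] at hcrit
  linarith

end CriticalPoints

section FiberCount

open MvPolynomial

theorem exists_mem_forall_eval_ne_zero {σ ι : Type*} [Finite σ] [Finite ι]
    {c : ι → MvPolynomial σ ℝ} (hc : ∀ i, c i ≠ 0) {s : Set (σ → ℝ)} (hs : s ∈ 𝓝 0) :
    ∃ v ∈ s, ∀ i, eval v (c i) ≠ 0 := by
  have := Fintype.ofFinite σ
  have := Fintype.ofFinite ι
  obtain ⟨η, hη, hηs⟩ := Metric.mem_nhds_iff.1 hs
  by_contra! hcon
  refine Finset.prod_ne_zero_iff.2 (fun i _ => hc i)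
    (funext_set (p := ∏ i, c i) (fun _ => Ioo 0 η) (fun _ => Ioo_infinite hη) fun x hx => ?_)
  obtain ⟨i, hi⟩ := hcon x <| hηs <| mem_ball_zero_iff.2 <| (pi_norm_lt_iff hη).2 fun j => by
    rw [Real.norm_of_nonneg (hx j (mem_univ j)).1.le]
    exact (hx j (mem_univ j)).2
  rw [map_prod, map_zero]
  exact Finset.prod_eq_zero (Finset.mem_univ i) hi

/-- Eliminate all variables but `X i` from the system `q = v`, by means of an algebraic relation
between `X i, q 0, …, q (n - 1)`. -/
theorem exists_eliminant {n d : ℕ} (hd : 1 ≤ d) {q : Fin n → MvPolynomial (Fin n) ℝ}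
    (hq : ∀ j, (q j).totalDegree ≤ d) (i : Fin n) :
    ∃ c : MvPolynomial (Fin n) ℝ, c ≠ 0 ∧ ∀ v, eval v c ≠ 0 →
      ∃ p : Polynomial ℝ, p ≠ 0 ∧ p.natDegree ≤ ((n + 1) * d + 1) ^ n ∧
        ∀ x, (∀ j, eval x (q j) = v j) → p.eval (x i) = 0 := by
  have hdeg : ∀ j, ((Fin.cons (X i) q : Fin (n + 1) → MvPolynomial (Fin n) ℝ) j).totalDegree ≤ d :=
    Fin.cases (by simpa using hd) (by simpa using hq)
  obtain ⟨A, hAE, hA, hrel⟩ := exists_ne_zero_aeval_eq_zero_fin hdeg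
  refine ⟨(finSuccEquiv ℝ n A).leadingCoeff, by simpa using hA, fun v hv =>
    ⟨(finSuccEquiv ℝ n A).map (eval v), fun h => hv ?_, ?_, fun x hx => ?_⟩⟩
  · simpa using congrArg (Polynomial.coeff · (finSuccEquiv ℝ n A).natDegree) h
  · refine Polynomial.natDegree_map_le.trans ?_
    rw [natDegree_finSuccEquiv, degreeOf_le_iff]
    exact fun s hs => (mem_restrictDegree _ _ _).1 hAE s hs 0
  · have hcons : (fun j => eval x ((Fin.cons (X i) q : Fin (n + 1) → MvPolynomial (Fin n) ℝ) j)) =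
        Fin.cons (x i) v :=
      funext (Fin.cases (by simp) (by simpa using hx))
    rw [← eval_eq_eval_mv_eval', ← hcons, ← eval_aeval, hrel, map_zero]

theorem exists_mem_card_fiber_le {n d : ℕ} (hd : 1 ≤ d) {q : Fin n → MvPolynomial (Fin n) ℝ}
    (hq : ∀ j, (q j).totalDegree ≤ d) {s : Set (Fin n → ℝ)}
    (hs : s ∈ 𝓝 0) :
    ∃ v ∈ s, ∃ Z : Finset (Fin n → ℝ),
      Z.card ≤ (((n + 1) * d + 1) ^ n) ^ n ∧ ∀ x, (∀ j, eval x (q j) = v j) → x ∈ Z := by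
  choose c hc hcp using exists_eliminant hd hq
  obtain ⟨v, hv, hcv⟩ := exists_mem_forall_eval_ne_zero hc hs
  choose p hp hpdeg hpx using fun i => hcp i v (hcv i)
  refine ⟨v, hv, Fintype.piFinset fun i => (p i).roots.toFinset, ?_, fun x hx =>
    Fintype.mem_piFinset.2 fun i => ?_⟩
  · rw [Fintype.card_piFinset]
    refine (Finset.prod_le_pow_card _ _ (((n + 1) * d + 1) ^ n) fun i _ => ?_).trans_eq (by simp)
    exact (Multiset.toFinset_card_le _).trans ((Polynomial.card_roots' _).trans (hpdeg i))
  · rw [Multiset.mem_toFinset, Polynomial.mem_roots (hp i)]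
    exact hpx i x hx

/-- Each of the sets contains a point where `∇(G²) = v`, for a common generic value `v`. -/
theorem card_le_of_eval_ne_zero_on_frontier {n g : ℕ} {G : MvPolynomial (Fin n) ℝ}
    (hG : G.totalDegree ≤ g) {ι : Type*} (B : Finset ι) {K : ι → Set (Fin n → ℝ)}
    (hK : ∀ b ∈ B, IsCompact (K b)) (hdisj : (B : Set ι).PairwiseDisjoint fun b => interior (K b))
    (hzero : ∀ b ∈ B, ∃ x ∈ K b, eval x G = 0)
    (hfrontier : ∀ b ∈ B, ∀ x ∈ frontier (K b), eval x G ≠ 0) :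
    B.card ≤ (((n + 1) * (2 * g + 1) + 1) ^ n) ^ n := by
  have hdeg : ∀ j, (pderiv j (G ^ 2)).totalDegree ≤ 2 * g + 1 := fun j =>
    (totalDegree_pderiv_le _ _).trans <| (totalDegree_pow _ _).trans <|
      (Nat.mul_le_mul_left _ hG).trans (Nat.le_succ _)
  have hcrit : ∀ᶠ v in 𝓝 (0 : Fin n → ℝ), ∀ b ∈ B,
      ∃ x ∈ interior (K b), ∀ j, eval x (pderiv j (G ^ 2)) = v j :=
    (Filter.eventually_all_finset B).2 fun b hb =>
      exists_mem_interior_eval_pderiv_sq_eq G (hK b hb) (hzero b hb) (hfrontier b hb)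
  obtain ⟨v, hv, Z, hZ, hmem⟩ := exists_mem_card_fiber_le (Nat.le_add_left _ _) hdeg hcrit
  choose! x hxint hx using hv
  refine (Finset.card_le_card_of_injOn x (fun b hb => hmem _ (hx b hb)) ?_).trans hZ
  intro b hb b' hb' h
  exact hdisj.elim_set hb hb' (x b) (hxint b hb) (h ▸ hxint b' hb')

end FiberCount

/-! ### Grid cells meeting an algebraic hypersurface -/

section GridCells

open MvPolynomial

/-- The closed cell with multi-index `v` of the product grid whose division points on the `i`-th
axis are `p i 0, p i 1, …`. -/
def gridCell {ι : Type*} (p : ι → ℕ → ℝ) (v : ι → ℕ) : Set (ι → ℝ) :=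
  Icc (fun i => p i (v i)) fun i => p i (v i + 1)

theorem interior_gridCell {ι : Type*} [Finite ι] (p : ι → ℕ → ℝ) (v : ι → ℕ) :
    interior (gridCell p v) = univ.pi fun i => Ioo (p i (v i)) (p i (v i + 1)) := by
  rw [gridCell, ← pi_univ_Icc, interior_pi_set finite_univ]
  simp only [interior_Icc]

theorem pairwise_disjoint_interior_gridCell {ι : Type*} [Finite ι] {p : ι → ℕ → ℝ}
    (hp : ∀ i, Monotone (p i)) :
    Pairwise (Function.onFun Disjoint fun v => interior (gridCell p v)) := by
  intro v w hvw
  obtain ⟨i, hi⟩ := Function.ne_iff.1 hvw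
  simp only [Function.onFun, interior_gridCell]
  exact disjoint_univ_pi.2 ⟨i, (hp i).pairwise_disjoint_on_Ioo_succ hi⟩

theorem exists_apply_eq_of_mem_frontier_gridCell {ι : Type*} [Finite ι] {p : ι → ℕ → ℝ}
    {v : ι → ℕ} {x : ι → ℝ} (hx : x ∈ frontier (gridCell p v)) :
    ∃ i, x i = p i (v i) ∨ x i = p i (v i + 1) := by
  rw [gridCell, isClosed_Icc.frontier_eq, ← gridCell, interior_gridCell] at hx
  by_contra! hne
  exact hx.2 fun i _ => ⟨(hx.1.1 i).lt_of_ne (hne i).1.symm, (hx.1.2 i).lt_of_ne (hne i).2⟩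

/-- The restriction of a polynomial to the hyperplane where the `i`-th variable equals `t`. -/
def hyperplaneSection {R : Type*} [CommSemiring R] {n : ℕ} (i : Fin (n + 1)) (t : R)
    (G : MvPolynomial (Fin (n + 1)) R) : MvPolynomial (Fin n) R :=
  aeval (i.insertNth (C t) X : Fin (n + 1) → MvPolynomial (Fin n) R) G

theorem totalDegree_hyperplaneSection_le {R : Type*} [CommSemiring R] {n : ℕ} (i : Fin (n + 1))
    (t : R) (G : MvPolynomial (Fin (n + 1)) R) :
    (hyperplaneSection i t G).totalDegree ≤ G.totalDegree := by
  refine (totalDegree_aeval_le ((Fin.forall_iff_succAbove i).2 ⟨?_, fun j => ?_⟩) G).trans_eq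
    (mul_one _)
  · simp
  · rw [Fin.insertNth_apply_succAbove]
    exact (totalDegree_monomial_le _ _).trans_eq (by simp)

theorem eval_hyperplaneSection {R : Type*} [CommSemiring R] {n : ℕ} (i : Fin (n + 1)) (t : R)
    (G : MvPolynomial (Fin (n + 1)) R) (x : Fin n → R) :
    eval x (hyperplaneSection i t G) = eval (i.insertNth t x : Fin (n + 1) → R) G := by
  rw [hyperplaneSection, eval_aeval]
  congr 2
  exact Fin.eq_insertNth_iff.2 ⟨by simp, funext fun j => by simp [Fin.removeNth]⟩

theorem card_hyperplaneSection_eq_zero_le {R : Type*} [CommRing R] [IsDomain R] [Infinite R] {n : ℕ}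
    (i : Fin (n + 1)) {G : MvPolynomial (Fin (n + 1)) R} (hG : G ≠ 0) {Z : Finset R}
    (hZ : ∀ t ∈ Z, hyperplaneSection i t G = 0) : Z.card ≤ G.totalDegree := by
  obtain ⟨x, hx⟩ : ∃ x, eval x G ≠ 0 := by
    by_contra! h
    exact hG (MvPolynomial.funext (by simpa using h))
  set P : Fin (n + 1) → Polynomial R :=
    i.insertNth Polynomial.X fun j => Polynomial.C (i.removeNth x j) with hP
  have heval : ∀ t, (aeval P G).eval t =
      eval (i.insertNth t (i.removeNth x) : Fin (n + 1) → R) G := by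
    intro t
    have h := comp_aeval_apply P (Polynomial.aeval t) G
    rw [aeval_eq_eval, Polynomial.coe_aeval_eq_eval] at h
    rw [h]
    congr 2
    exact Fin.eq_insertNth_iff.2 ⟨by simp [hP], funext fun j => by simp [hP, Fin.removeNth]⟩
  have hne : aeval P G ≠ 0 := fun h => hx <| by
    rw [← Fin.insertNth_self_removeNth i x, ← heval, h, Polynomial.eval_zero]
  have hdeg : (aeval P G).natDegree ≤ G.totalDegree := by
    have hvar : ∀ j, (P j).natDegree ≤ 1 :=
      (Fin.forall_iff_succAbove i).2
        ⟨by simp [hP], fun j => by simp [hP]⟩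
    simpa using aeval_natDegree_le G le_rfl P hvar
  refine (Polynomial.card_le_degree_of_subset_roots fun t ht => ?_).trans hdeg
  rw [Polynomial.mem_roots hne, Polynomial.IsRoot.def, heval, ← eval_hyperplaneSection,
    hZ t ht, map_zero]

/-- The constant `K` bounds the number of cells met by a hypersurface of degree at most `g` in
`ℝⁿ`: in a grid of `N 0 × ⋯ × N (n - 1)` cells, it meets at most `K * T` of them as soon as
`T ≥ ∏ j ≠ i, (N j + 1)` for all `i`. -/
def CellCountBound (n g K : ℕ) : Prop :=
  ∀ G : MvPolynomial (Fin n) ℝ, G ≠ 0 → G.totalDegree ≤ g →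
    ∀ p : Fin n → ℕ → ℝ, (∀ j, StrictMono (p j)) → ∀ (N : Fin n → ℕ) (T : ℕ),
    (∀ i, ∏ j ∈ Finset.univ.erase i, (N j + 1) ≤ T) → ∀ B : Finset (Fin n → ℕ),
    (∀ v ∈ B, ∀ i, v i < N i) → (∀ v ∈ B, ∃ x ∈ gridCell p v, eval x G = 0) → B.card ≤ K * T

theorem cellCountBound_zero (g : ℕ) : CellCountBound 0 g 0 := by
  intro G hG _ p _ N T _ B _ hz
  suffices B = ∅ by simp [this]
  refine Finset.eq_empty_iff_forall_notMem.2 fun v hv => hG (MvPolynomial.funext fun y => ?_)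
  obtain ⟨x, _, hx⟩ := hz v hv
  rw [Subsingleton.elim y x, hx, map_zero]

theorem card_le_prod_erase {ι : Type*} [Fintype ι] [DecidableEq ι] {N : ι → ℕ} {B : Finset (ι → ℕ)}
    (hB : ∀ v ∈ B, ∀ j, v j < N j) {i : ι} {c : ℕ} (hc : ∀ v ∈ B, v i = c) :
    B.card ≤ ∏ j ∈ Finset.univ.erase i, N j := by
  have hsub : B ⊆ Fintype.piFinset fun j => if j = i then {c} else Finset.range (N j) := by
    intro v hv
    refine Fintype.mem_piFinset.2 fun j => ?_
    split_ifs with hj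
    · exact Finset.mem_singleton.2 (hj ▸ hc v hv)
    · exact Finset.mem_range.2 (hB v hv j)
  refine (Finset.card_le_card hsub).trans_eq ?_
  rw [Fintype.card_piFinset, ← Finset.mul_prod_erase _ _ (Finset.mem_univ i), if_pos rfl,
    Finset.card_singleton, one_mul]
  refine Finset.prod_congr rfl fun j hj => ?_
  rw [if_neg (Finset.ne_of_mem_erase hj), Finset.card_range]

theorem prod_erase_succAbove_mul {M : Type*} [CommMonoid M] {n : ℕ} (i : Fin (n + 1)) (k : Fin n)
    (h : Fin (n + 1) → M) :
    (∏ j ∈ Finset.univ.erase k, h (i.succAbove j)) * h i =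
      ∏ j ∈ Finset.univ.erase (i.succAbove k), h j := by
  have : Finset.univ.erase (i.succAbove k) =
      insert i ((Finset.univ.erase k).image i.succAbove) := by
    ext j
    cases j using Fin.succAboveCases i with
    | x => simp [(Fin.succAbove_ne i k).symm]
    | p j => simp [Fin.succAbove_ne]
  rw [this, Finset.prod_insert (by simp [Fin.succAbove_ne]),
    Finset.prod_image fun a _ b _ hab => Fin.succAbove_right_injective hab, mul_comm]

/-- Forgetting the `i`-th coordinate sends these cells to cells of the face grid that meet the
hyperplane section of `{G = 0}`. -/
theorem CellCountBound.card_slab_le {n g K : ℕ} (hK : CellCountBound n g K)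
    {G : MvPolynomial (Fin (n + 1)) ℝ} (hdeg : G.totalDegree ≤ g)
    {p : Fin (n + 1) → ℕ → ℝ} (hp : ∀ j, StrictMono (p j)) {N : Fin (n + 1) → ℕ} {T : ℕ}
    (hT : ∀ i, ∏ j ∈ Finset.univ.erase i, (N j + 1) ≤ T) {i : Fin (n + 1)} {t : ℝ}
    (hGt : hyperplaneSection i t G ≠ 0) {c : ℕ} {B : Finset (Fin (n + 1) → ℕ)}
    (hB : ∀ v ∈ B, ∀ i, v i < N i) (hc : ∀ v ∈ B, v i = c)
    (hz : ∀ v ∈ B, ∃ x ∈ gridCell p v, x i = t ∧ eval x G = 0) :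
    B.card ≤ K * (T / (N i + 1)) := by
  have hinj : Set.InjOn i.removeNth (B : Set (Fin (n + 1) → ℕ)) := by
    intro v hv w hw h
    rw [← Fin.insertNth_self_removeNth i v, ← Fin.insertNth_self_removeNth i w, hc v hv, hc w hw, h]
  rw [← Finset.card_image_of_injOn hinj]
  refine hK _ hGt ((totalDegree_hyperplaneSection_le i t G).trans hdeg) (fun j => p (i.succAbove j))
    (fun j => hp _) (fun j => N (i.succAbove j)) _ (fun k => ?_) _ ?_ ?_
  · rw [Nat.le_div_iff_mul_le (Nat.succ_pos _)]
    exact (prod_erase_succAbove_mul i k fun j => N j + 1).trans_le (hT _)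
  · exact Finset.forall_mem_image.2 fun v hv j => hB v hv _
  · refine Finset.forall_mem_image.2 fun v hv => ?_
    obtain ⟨x, hx, rfl, hxG⟩ := hz v hv
    refine ⟨i.removeNth x, ⟨fun j => hx.1 _, fun j => hx.2 _⟩, ?_⟩
    rw [eval_hyperplaneSection, Fin.insertNth_self_removeNth, hxG]

theorem card_le_two_mul_of_adjacent {ι : Type*} {B : Finset (ι → ℕ)} {i : ι} {l M : ℕ}
    (hadj : ∀ v ∈ B, v i = l ∨ v i + 1 = l) (hM : ∀ c, (B.filter fun v => v i = c).card ≤ M) :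
    B.card ≤ 2 * M := by
  classical
  have hsub : B ⊆ (B.filter fun v => v i = l) ∪ B.filter fun v => v i = l - 1 := by
    intro v hv
    simp only [Finset.mem_union, Finset.mem_filter, hv, true_and]
    have := hadj v hv
    omega
  have := (Finset.card_le_card hsub).trans (Finset.card_union_le _ _)
  have := hM l
  have := hM (l - 1)
  omega

/-- At most `g` of the hyperplanes `x i = p i l` lie in `{G = 0}`; the induction hypothesis applies
to the sections of `{G = 0}` by all the others. -/
theorem CellCountBound.card_le_of_zero_on_faces {n g K : ℕ} (hK : CellCountBound n g K)
    {G : MvPolynomial (Fin (n + 1)) ℝ} (hG : G ≠ 0) (hdeg : G.totalDegree ≤ g)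
    {p : Fin (n + 1) → ℕ → ℝ} (hp : ∀ j, StrictMono (p j)) {N : Fin (n + 1) → ℕ} {T : ℕ}
    (hT : ∀ i, ∏ j ∈ Finset.univ.erase i, (N j + 1) ≤ T) (i : Fin (n + 1))
    {B : Finset (Fin (n + 1) → ℕ)} (hB : ∀ v ∈ B, ∀ i, v i < N i)
    (hz : ∀ v ∈ B, ∃ x ∈ gridCell p v, (x i = p i (v i) ∨ x i = p i (v i + 1)) ∧ eval x G = 0) :
    B.card ≤ (2 * g + 2 * K) * T := by
  classical
  set S : Finset ℕ := Finset.range (N i + 1)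
  set F : ℕ → Finset (Fin (n + 1) → ℕ) := fun l => B.filter fun v =>
    (v i = l ∨ v i + 1 = l) ∧ ∃ x ∈ gridCell p v, x i = p i l ∧ eval x G = 0 with hF
  have hFB : ∀ l, ∀ v ∈ F l, ∀ j, v j < N j := fun l v hv => hB v (Finset.mem_filter.1 hv).1
  have hadj : ∀ l, ∀ v ∈ F l, v i = l ∨ v i + 1 = l := fun l v hv => (Finset.mem_filter.1 hv).2.1
  have hcover : B ⊆ S.biUnion F := by
    intro v hv
    have hvi := hB v hv i
    simp only [S, hF, Finset.mem_biUnion, Finset.mem_range, Finset.mem_filter]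
    obtain ⟨x, hx, hxi | hxi, hxG⟩ := hz v hv
    · exact ⟨v i, by omega, hv, Or.inl rfl, x, hx, hxi, hxG⟩
    · exact ⟨v i + 1, by omega, hv, Or.inr rfl, x, hx, hxi, hxG⟩
  have hdegenerate : ∀ l, (F l).card ≤ 2 * T := fun l =>
    card_le_two_mul_of_adjacent (hadj l) fun c =>
      (card_le_prod_erase
        (fun v hv j => (hFB l v (Finset.mem_filter.1 hv).1 j).trans (Nat.lt_succ_self _))
        fun v hv => (Finset.mem_filter.1 hv).2).trans (hT i)
  have hproper : ∀ l, hyperplaneSection i (p i l) G ≠ 0 → (F l).card ≤ 2 * (K * (T / (N i + 1))) :=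
    fun l hl => card_le_two_mul_of_adjacent (hadj l) fun c =>
      hK.card_slab_le hdeg hp hT hl (fun v hv => hFB l v (Finset.mem_filter.1 hv).1)
        (fun v hv => (Finset.mem_filter.1 hv).2)
        fun v hv => (Finset.mem_filter.1 (Finset.mem_filter.1 hv).1).2.2
  have hS : (S.filter fun l => hyperplaneSection i (p i l) G = 0).card ≤ g := by
    rw [← Finset.card_image_of_injective _ (hp i).injective]
    exact (card_hyperplaneSection_eq_zero_le i hG <| Finset.forall_mem_image.2 fun l hl =>
      (Finset.mem_filter.1 hl).2).trans hdeg
  calc B.card ≤ ∑ l ∈ S, (F l).card := (Finset.card_le_card hcover).trans Finset.card_biUnion_le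
    _ = _ := (Finset.sum_filter_add_sum_filter_not S
        (fun l => hyperplaneSection i (p i l) G = 0) _).symm
    _ ≤ g * (2 * T) + (N i + 1) * (2 * (K * (T / (N i + 1)))) := by
        refine add_le_add ((Finset.sum_le_card_nsmul _ _ _ fun l _ => hdegenerate l).trans ?_)
          ((Finset.sum_le_card_nsmul _ _ _ fun l hl =>
            hproper l (Finset.mem_filter.1 hl).2).trans ?_)
        · exact Nat.mul_le_mul_right _ hS
        · exact Nat.mul_le_mul_right _ ((Finset.card_filter_le _ _).trans_eq (Finset.card_range _))
    _ = g * (2 * T) + 2 * K * ((N i + 1) * (T / (N i + 1))) := by ring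
    _ ≤ g * (2 * T) + 2 * K * T := by gcongr; exact Nat.mul_div_le _ _
    _ = (2 * g + 2 * K) * T := by ring

theorem CellCountBound.succ {n g K : ℕ} (hK : CellCountBound n g K) :
    CellCountBound (n + 1) g
      ((n + 1) * (2 * g + 2 * K) + (((n + 2) * (2 * g + 1) + 1) ^ (n + 1)) ^ (n + 1)) := by
  classical
  intro G hG hdeg p hp N T hT B hB hz
  set E := (((n + 2) * (2 * g + 1) + 1) ^ (n + 1)) ^ (n + 1)
  set inner := B.filter fun v => ∀ x ∈ frontier (gridCell p v), eval x G ≠ 0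
  set onFace : Fin (n + 1) → Finset (Fin (n + 1) → ℕ) := fun i => B.filter fun v =>
    ∃ x ∈ gridCell p v, (x i = p i (v i) ∨ x i = p i (v i + 1)) ∧ eval x G = 0
  have hcover : B ⊆ inner ∪ Finset.univ.biUnion onFace := by
    intro v hv
    simp only [inner, onFace, Finset.mem_union, Finset.mem_filter, Finset.mem_biUnion,
      Finset.mem_univ, hv, true_and]
    refine or_iff_not_imp_left.2 fun h => ?_
    push Not at h
    obtain ⟨x, hx, hxG⟩ := h
    obtain ⟨i, hi⟩ := exists_apply_eq_of_mem_frontier_gridCell hx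
    exact ⟨i, x, isClosed_Icc.frontier_subset hx, hi, hxG⟩
  have hinner : inner.card ≤ E :=
    card_le_of_eval_ne_zero_on_frontier hdeg inner (K := gridCell p) (fun v _ => isCompact_Icc)
      ((pairwise_disjoint_interior_gridCell fun i => (hp i).monotone).set_pairwise _)
      (fun v hv => hz v (Finset.mem_filter.1 hv).1) fun v hv => (Finset.mem_filter.1 hv).2
  have honFace : ∀ i, (onFace i).card ≤ (2 * g + 2 * K) * T := fun i =>
    hK.card_le_of_zero_on_faces hG hdeg hp hT i (fun v hv => hB v (Finset.mem_filter.1 hv).1)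
      fun v hv => (Finset.mem_filter.1 hv).2
  have hT1 : 1 ≤ T := le_trans (Finset.one_le_prod' fun j _ => by omega) (hT 0)
  calc B.card ≤ inner.card + (Finset.univ.biUnion onFace).card :=
        (Finset.card_le_card hcover).trans (Finset.card_union_le _ _)
    _ ≤ E * T + (n + 1) * ((2 * g + 2 * K) * T) := by
        refine add_le_add (hinner.trans (Nat.le_mul_of_pos_right _ hT1)) ?_
        exact (Finset.card_biUnion_le_card_mul _ _ _ fun i _ => honFace i).trans_eq (by simp)
    _ = _ := by ring

theorem exists_cellCountBound (n : ℕ) :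
    ∃ c q : ℕ, ∀ g, CellCountBound n g (c * (g + 1) ^ q) := by
  suffices ∃ K : ℕ → ℕ, (∃ c q : ℕ, ∀ g, K g ≤ c * (g + 1) ^ q) ∧ ∀ g, CellCountBound n g (K g) by
    obtain ⟨K, ⟨c, q, hKle⟩, hK⟩ := this
    exact ⟨c, q, fun g G hG hdeg p hp N T hT B hB hz =>
      (hK g G hG hdeg p hp N T hT B hB hz).trans (Nat.mul_le_mul_right _ (hKle g))⟩
  induction n with
  | zero => exact ⟨0, ⟨0, 0, by simp⟩, cellCountBound_zero⟩
  | succ n ih =>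
    obtain ⟨K, ⟨c, q, hKle⟩, hK⟩ := ih
    refine ⟨_, ?_, fun g => (hK g).succ⟩
    set r := (n + 1) * (n + 1)
    refine ⟨(n + 1) * (2 + 2 * c) + (3 * (n + 2)) ^ r, q + 1 + r, fun g => ?_⟩
    have hpow : ∀ s ≤ q + 1 + r, (g + 1) ^ s ≤ (g + 1) ^ (q + 1 + r) := fun s hs =>
      Nat.pow_le_pow_right (by omega) hs
    have hE : (((n + 2) * (2 * g + 1) + 1) ^ (n + 1)) ^ (n + 1) ≤
        (3 * (n + 2)) ^ r * (g + 1) ^ (q + 1 + r) := by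
      calc _ = ((n + 2) * (2 * g + 1) + 1) ^ r := by rw [← pow_mul]
        _ ≤ ((3 * (n + 2)) * (g + 1)) ^ r := by gcongr; nlinarith
        _ = (3 * (n + 2)) ^ r * (g + 1) ^ r := mul_pow _ _ _
        _ ≤ _ := Nat.mul_le_mul_left _ (hpow r (by omega))
    have hg : g ≤ (g + 1) ^ (q + 1 + r) := (Nat.le_succ g).trans (Nat.le_self_pow (by omega) _)
    have hKg : K g ≤ c * (g + 1) ^ (q + 1 + r) :=
      (hKle g).trans (Nat.mul_le_mul_left _ (hpow q (by omega)))
    calc _ ≤ (n + 1) * (2 * (g + 1) ^ (q + 1 + r) + 2 * (c * (g + 1) ^ (q + 1 + r))) +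
          (3 * (n + 2)) ^ r * (g + 1) ^ (q + 1 + r) := by gcongr
      _ = _ := by ring

end GridCells

/-! ### Yomdin's estimate on the interval -/

section CriticalMass

theorem natCast_le_encard_zeros_deriv {h : ℝ → ℝ} (hh : Differentiable ℝ h) {u v : ℝ} {r : ℕ}
    (hr : ((r + 1 : ℕ) : ℕ∞) ≤ {y ∈ Icc u v | h y = 0}.encard) :
    (r : ℕ∞) ≤ {y ∈ Icc u v | deriv h y = 0}.encard := by
  obtain ⟨Z, hZ, hcard⟩ := Set.exists_subset_encard_eq hr
  have hfin : Z.Finite := Set.finite_of_encard_eq_coe hcard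
  rw [hfin.encard_eq_coe_toFinset_card, Nat.cast_inj] at hcard
  set z := hfin.toFinset.orderEmbOfFin hcard
  have hz : ∀ i, z i ∈ Icc u v ∧ h (z i) = 0 := fun i =>
    hZ (hfin.mem_toFinset.1 (hfin.toFinset.orderEmbOfFin_mem hcard i))
  have hrolle : ∀ i : Fin r, ∃ w ∈ Ioo (z i.castSucc) (z i.succ), deriv h w = 0 := fun i =>
    exists_deriv_eq_zero (z.strictMono Fin.castSucc_lt_succ) hh.continuous.continuousOn
      (by rw [(hz _).2, (hz _).2])
  choose w hw hw0 using hrolle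
  have hwmono : StrictMono w := fun i j hij =>
    (hw i).2.trans_le ((z.monotone (Fin.le_iff_val_le_val.2 (by simpa using hij))).trans
      (hw j).1.le)
  calc (r : ℕ∞) ≤ (range w).encard := by simpa using hwmono.injective.encard_range
    _ ≤ {y ∈ Icc u v | deriv h y = 0}.encard :=
      Set.encard_le_encard <| Set.range_subset_iff.2 fun i =>
        ⟨⟨(hz _).1.1.trans (hw i).1.le, (hw i).2.le.trans (hz _).1.2⟩, hw0 i⟩

theorem abs_le_mul_pow_of_le_encard_zeros {r : ℕ} {h : ℝ → ℝ} (hh : ContDiff ℝ r h) {u v C : ℝ}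
    (hr : (r : ℕ∞) ≤ {y ∈ Icc u v | h y = 0}.encard)
    (hC : ∀ y ∈ Icc u v, |iteratedDeriv r h y| ≤ C) :
    ∀ y ∈ Icc u v, |h y| ≤ C * (v - u) ^ r := by
  induction r generalizing h with
  | zero => simpa using hC
  | succ r ih =>
    intro y hy
    have hd : Differentiable ℝ h := hh.differentiable (by simp)
    have hderiv : ∀ x ∈ Icc u v, ‖deriv h x‖ ≤ C * (v - u) ^ r :=
      ih (contDiff_succ_iff_deriv.1 hh).2.2 (natCast_le_encard_zeros_deriv hd hr)
        (by simpa only [iteratedDeriv_succ'] using hC)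
    obtain ⟨z, hz, hz0⟩ : {y ∈ Icc u v | h y = 0}.Nonempty := by
      rw [← Set.encard_pos]
      exact lt_of_lt_of_le (by simp) hr
    have hmvt := (convex_Icc u v).norm_image_sub_le_of_norm_deriv_le (fun x _ => hd x) hderiv hz hy
    rw [hz0, sub_zero] at hmvt
    calc |h y| ≤ C * (v - u) ^ r * |y - z| := hmvt
      _ ≤ C * (v - u) ^ r * (v - u) := by
          gcongr
          · exact (norm_nonneg _).trans (hderiv y hy)
          · exact abs_sub_le_of_le_of_le hy.1 hy.2 hz.1 hz.2
      _ = C * (v - u) ^ (r + 1) := by ring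

theorem injOn_Icc_of_deriv_ne_zero {f : ℝ → ℝ} (hf : Differentiable ℝ f) {u v : ℝ}
    (hne : ∀ x ∈ Ioo u v, deriv f x ≠ 0) : InjOn f (Icc u v) := by
  intro x hx y hy hxy
  by_contra hxy'
  wlog h : x < y generalizing x y
  · exact this hy hx hxy.symm (Ne.symm hxy') (lt_of_le_of_ne (not_lt.1 h) (Ne.symm hxy'))
  obtain ⟨c, hc, hc0⟩ := exists_deriv_eq_zero h hf.continuous.continuousOn hxy
  exact hne c ⟨hx.1.trans_lt hc.1, hc.2.trans_le hy.2⟩ hc0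

theorem setLIntegral_Icc_le_of_forall_avoiding {φ : ℝ → ℝ≥0∞} {B : ℝ≥0∞} (F : Finset ℝ) {u v : ℝ}
    (huv : u ≤ v)
    (h : ∀ u' v', u ≤ u' → u' ≤ v' → v' ≤ v → (∀ x ∈ F, x ∉ Ioo u' v') →
      ∫⁻ y in Icc u' v', φ y ≤ B) :
    ∫⁻ y in Icc u v, φ y ≤ (F.card + 1) * B := by
  induction F using Finset.induction_on_max generalizing v with
  | empty => simpa using h u v le_rfl huv le_rfl
  | insert z F hF ih =>
    have hcard : (insert z F).card = F.card + 1 :=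
      Finset.card_insert_of_notMem fun hz => (hF z hz).false
    by_cases hz : z ∈ Ioo u v
    · have hleft : ∫⁻ y in Icc u z, φ y ≤ (F.card + 1) * B := by
        refine ih hz.1.le fun u' v' hu huv' hv havoid => h u' v' hu huv' (hv.trans hz.2.le) ?_
        rw [Finset.forall_mem_insert]
        exact ⟨fun hz' => hz'.2.not_ge hv, havoid⟩
      have hright : ∫⁻ y in Icc z v, φ y ≤ B := by
        refine h z v hz.1.le hz.2.le le_rfl ?_
        rw [Finset.forall_mem_insert]
        exact ⟨fun hz' => hz'.1.false, fun x hx hx' => (hx'.1.trans (hF x hx)).false⟩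
      rw [← Icc_union_Icc_eq_Icc hz.1.le hz.2.le, hcard]
      calc _ ≤ (F.card + 1) * B + B := (lintegral_union_le _ _ _).trans (add_le_add hleft hright)
        _ = _ := by push_cast; ring
    · refine (ih huv fun u' v' hu huv' hv havoid => h u' v' hu huv' hv ?_).trans ?_
      · rw [Finset.forall_mem_insert]
        exact ⟨fun hz' => hz (Ioo_subset_Ioo hu hv hz'), havoid⟩
      · rw [hcard]
        gcongr
        simp

/-- The measure `g dy` satisfies the Hölder-type bound `∫_J g ≤ K |J| ^ α` on every compact interval
`J ⊆ I`. -/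
def HasHolderMass (g : ℝ → ℝ≥0∞) (I : Set ℝ) (K α : ℝ) : Prop :=
  ∀ ⦃u v : ℝ⦄, u ≤ v → Icc u v ⊆ I → ∫⁻ y in Icc u v, g y ≤ ENNReal.ofReal (K * (v - u) ^ α)

section Transport

variable {f : ℝ → ℝ} {g : ℝ → ℝ≥0∞} {I : Set ℝ} {K α S u v : ℝ}

theorem HasHolderMass.lintegral_comp_le (hg : HasHolderMass g I K α) (hK : 0 ≤ K) (hα : 0 ≤ α)
    (hf : Differentiable ℝ f) (huv : u ≤ v) (hmaps : MapsTo f (Icc u v) I)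
    (hne : ∀ x ∈ Ioo u v, deriv f x ≠ 0) (hS : ∀ y ∈ Icc u v, |deriv f y| ≤ S) :
    ∫⁻ y in Icc u v, ENNReal.ofReal |deriv f y| * g (f y) ≤
      ENNReal.ofReal (K * (S * (v - u)) ^ α) := by
  rw [← lintegral_image_eq_lintegral_abs_deriv_mul measurableSet_Icc
    (fun x _ => (hf x).hasDerivAt.hasDerivWithinAt) (injOn_Icc_of_deriv_ne_zero hf hne)]
  have himage := hf.continuous.continuousOn.image_Icc huv
  set c := sInf (f '' Icc u v)
  set d := sSup (f '' Icc u v)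
  have hcd : c ≤ d := nonempty_Icc.1 (himage ▸ (nonempty_Icc.2 huv).image f)
  obtain ⟨x, hx, hxc⟩ : c ∈ f '' Icc u v := himage ▸ left_mem_Icc.2 hcd
  obtain ⟨y, hy, hyd⟩ : d ∈ f '' Icc u v := himage ▸ right_mem_Icc.2 hcd
  have hlen : d - c ≤ S * (v - u) :=
    calc d - c ≤ |f y - f x| := hxc ▸ hyd ▸ le_abs_self _
      _ ≤ S * |y - x| := (convex_Icc u v).norm_image_sub_le_of_norm_deriv_le (fun z _ => hf z) hS
          hx hy
      _ ≤ S * (v - u) := by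
          gcongr
          · exact (abs_nonneg _).trans (hS x hx)
          · exact abs_sub_le_of_le_of_le hy.1 hy.2 hx.1 hx.2
  rw [himage]
  refine (hg hcd (himage ▸ hmaps.image_subset)).trans (ENNReal.ofReal_le_ofReal ?_)
  gcongr

theorem HasHolderMass.lintegral_comp_le_of_encard_lt (hg : HasHolderMass g I K α) (hK : 0 ≤ K)
    (hα : 0 ≤ α) (hf : Differentiable ℝ f) (huv : u ≤ v) (hmaps : MapsTo f (Icc u v) I)
    {r : ℕ} (hr : {y ∈ Icc u v | deriv f y = 0}.encard < r)
    (hS : ∀ y ∈ Icc u v, |deriv f y| ≤ S) :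
    ∫⁻ y in Icc u v, ENNReal.ofReal |deriv f y| * g (f y) ≤
      ENNReal.ofReal (r * (K * (S * (v - u)) ^ α)) := by
  have hfin := Set.finite_of_encard_le_coe hr.le
  rw [hfin.encard_eq_coe_toFinset_card, Nat.cast_lt] at hr
  have hS0 : 0 ≤ S := (abs_nonneg _).trans (hS u (left_mem_Icc.2 huv))
  calc ∫⁻ y in Icc u v, ENNReal.ofReal |deriv f y| * g (f y)
      ≤ (hfin.toFinset.card + 1) * ENNReal.ofReal (K * (S * (v - u)) ^ α) := by
        refine setLIntegral_Icc_le_of_forall_avoiding _ huv fun u' v' hu huv' hv havoid => ?_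
        have hsub : Icc u' v' ⊆ Icc u v := Icc_subset_Icc hu hv
        refine (hg.lintegral_comp_le hK hα hf huv' (hmaps.mono_left hsub) (fun x hx hx0 =>
          havoid x (hfin.mem_toFinset.2 ⟨hsub (Ioo_subset_Icc_self hx), hx0⟩) hx)
          fun y hy => hS y (hsub hy)).trans (ENNReal.ofReal_le_ofReal ?_)
        gcongr
    _ ≤ r * ENNReal.ofReal (K * (S * (v - u)) ^ α) := by
        gcongr
        exact_mod_cast hr
    _ = _ := by rw [ENNReal.ofReal_mul r.cast_nonneg, ENNReal.ofReal_natCast]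

end Transport

/-- The a priori bounds on the derivatives of a `C^(r+1)` self-map of `I` that enter Yomdin's
estimate of order `r`. -/
structure DerivBounds (f : ℝ → ℝ) (I : Set ℝ) (r : ℕ) (L C : ℝ) : Prop where
  contDiff : ContDiff ℝ (r + 1) f
  mapsTo : MapsTo f I I
  one_le : 1 ≤ L
  nonneg : 0 ≤ C
  abs_deriv_le : ∀ y ∈ I, |deriv f y| ≤ L
  abs_iteratedDeriv_two_le : ∀ y ∈ I, |iteratedDeriv 2 f y| ≤ C
  abs_iteratedDeriv_le : ∀ y ∈ I, |iteratedDeriv (r + 1) f y| ≤ C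

/-- The integral of `|f'| g ∘ f` is at most `B |J| ^ 2` on each interval `J ⊆ I` of length at most
one that contains `r` critical points of `f`. -/
def CriticalMassBound (f : ℝ → ℝ) (g : ℝ → ℝ≥0∞) (I : Set ℝ) (r : ℕ) (B : ℝ) : Prop :=
  ∀ ⦃u v : ℝ⦄, u ≤ v → v - u ≤ 1 → Icc u v ⊆ I → (r : ℕ∞) ≤ {y ∈ Icc u v | deriv f y = 0}.encard →
    ∫⁻ y in Icc u v, ENNReal.ofReal |deriv f y| * g (f y) ≤ ENNReal.ofReal (B * (v - u) ^ 2)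

section Yomdin

variable {f : ℝ → ℝ} {g : ℝ → ℝ≥0∞} {I : Set ℝ} {r : ℕ} {L C K α u v : ℝ}

theorem DerivBounds.differentiable (hf : DerivBounds f I r L C) : Differentiable ℝ f :=
  hf.contDiff.differentiable (by simp)

theorem DerivBounds.contDiff_deriv (hf : DerivBounds f I r L C) : ContDiff ℝ r (deriv f) :=
  (contDiff_succ_iff_deriv.1 hf.contDiff).2.2

theorem DerivBounds.abs_deriv_le_mul_pow (hf : DerivBounds f I r L C) (hI : Icc u v ⊆ I)
    (hcrit : (r : ℕ∞) ≤ {y ∈ Icc u v | deriv f y = 0}.encard) :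
    ∀ y ∈ Icc u v, |deriv f y| ≤ C * (v - u) ^ r :=
  abs_le_mul_pow_of_le_encard_zeros hf.contDiff_deriv hcrit fun y hy => by
    simpa only [iteratedDeriv_succ'] using hf.abs_iteratedDeriv_le y (hI hy)

theorem DerivBounds.abs_deriv_le_mul (hf : DerivBounds f I r L C) (hr : r ≠ 0)
    (hI : Icc u v ⊆ I) (hcrit : {y ∈ Icc u v | deriv f y = 0}.Nonempty) :
    ∀ y ∈ Icc u v, |deriv f y| ≤ C * (v - u) := by
  have hf' : ContDiff ℝ (1 : ℕ) (deriv f) :=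
    hf.contDiff_deriv.of_le (by exact_mod_cast Nat.one_le_iff_ne_zero.2 hr)
  have := abs_le_mul_pow_of_le_encard_zeros hf' (by simpa using hcrit) fun y hy => by
    simpa only [iteratedDeriv_succ'] using hf.abs_iteratedDeriv_two_le y (hI hy)
  simpa using this

theorem DerivBounds.criticalMassBound_mul (hf : DerivBounds f I r L C) (hr : r ≠ 0) {M : ℝ}
    (hM : 0 ≤ M) (hg : ∀ y ∈ I, g y ≤ ENNReal.ofReal M) : CriticalMassBound f g I r (C * M) := by
  intro u v huv huv1 hI hcrit
  have hC := hf.nonneg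
  have hl : 0 ≤ v - u := sub_nonneg.2 huv
  calc ∫⁻ y in Icc u v, ENNReal.ofReal |deriv f y| * g (f y)
      ≤ ∫⁻ _ in Icc u v, ENNReal.ofReal (C * (v - u) ^ r * M) := by
        refine setLIntegral_mono' measurableSet_Icc fun y hy => ?_
        rw [ENNReal.ofReal_mul (by positivity)]
        gcongr
        · exact hf.abs_deriv_le_mul_pow hI hcrit y hy
        · exact hg _ (hf.mapsTo (hI hy))
    _ = ENNReal.ofReal (C * (v - u) ^ r * M * (v - u)) := by
        rw [setLIntegral_const, Real.volume_Icc, ← ENNReal.ofReal_mul (by positivity)]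
    _ ≤ ENNReal.ofReal (C * M * (v - u) ^ 2) := by
        refine ENNReal.ofReal_le_ofReal ?_
        calc C * (v - u) ^ r * M * (v - u) ≤ C * (v - u) * M * (v - u) := by
              gcongr
              exact pow_le_of_le_one hl huv1 hr
          _ = C * M * (v - u) ^ 2 := by ring

/-- Cut the interval in half: a half with `r` critical points is controlled by `B`, and on the other
halves `|f'| ≤ C |J| ^ r` and the change of variables `f` has fewer than `r` folds. -/
theorem CriticalMassBound.halve (hf : DerivBounds f I r L C) (hα : α * (r + 1) = 2)
    (hK : 0 ≤ K) (hg : HasHolderMass g I K α) {B : ℝ} (hB : 0 ≤ B)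
    (hfB : CriticalMassBound f g I r B) :
    CriticalMassBound f g I r (B / 2 + 2 * (r * (K * C ^ α))) := by
  intro u v huv huv1 hI hcrit
  have hC := hf.nonneg
  have hl : 0 ≤ v - u := sub_nonneg.2 huv
  have hα0 : 0 ≤ α := by
    by_contra! h
    nlinarith [r.cast_nonneg (α := ℝ)]
  have hCα : (C * (v - u) ^ r * (v - u)) ^ α = C ^ α * (v - u) ^ 2 := by
    rw [mul_assoc, ← pow_succ, Real.mul_rpow hC (by positivity), ← Real.rpow_natCast,
      ← Real.rpow_mul hl, Nat.cast_succ, mul_comm _ α, hα, Real.rpow_two]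
  have hhalf : ∀ u' v', u ≤ u' → u' ≤ v' → v' ≤ v → v' - u' = (v - u) / 2 →
      ∫⁻ y in Icc u' v', ENNReal.ofReal |deriv f y| * g (f y) ≤
        ENNReal.ofReal (B * ((v - u) / 2) ^ 2 + r * (K * C ^ α) * (v - u) ^ 2) := by
    intro u' v' hu huv' hv hlen
    have hsub : Icc u' v' ⊆ Icc u v := Icc_subset_Icc hu hv
    rcases le_or_gt (r : ℕ∞) {y ∈ Icc u' v' | deriv f y = 0}.encard with hmany | hfew
    · refine (hfB huv' (by linarith) (hsub.trans hI) hmany).trans (ENNReal.ofReal_le_ofReal ?_)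
      rw [hlen]
      exact le_add_of_nonneg_right (by positivity)
    · refine (hg.lintegral_comp_le_of_encard_lt hK hα0 hf.differentiable huv'
        (hf.mapsTo.mono_left (hsub.trans hI)) hfew
        fun y hy => hf.abs_deriv_le_mul_pow hI hcrit y (hsub hy)).trans
        (ENNReal.ofReal_le_ofReal ?_)
      calc r * (K * (C * (v - u) ^ r * (v' - u')) ^ α)
          ≤ r * (K * (C * (v - u) ^ r * (v - u)) ^ α) := by gcongr
        _ = r * (K * C ^ α) * (v - u) ^ 2 := by rw [hCα]; ring
        _ ≤ _ := le_add_of_nonneg_left (by positivity)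
  have hmid : u ≤ (u + v) / 2 ∧ (u + v) / 2 ≤ v := by constructor <;> linarith
  rw [← Icc_union_Icc_eq_Icc hmid.1 hmid.2]
  refine (lintegral_union_le _ _ _).trans ((add_le_add
    (hhalf _ _ le_rfl hmid.1 hmid.2 (by ring)) (hhalf _ _ hmid.1 hmid.2 le_rfl (by ring))).trans ?_)
  rw [← ENNReal.ofReal_add (by positivity) (by positivity)]
  exact ENNReal.ofReal_le_ofReal (by linarith)

theorem DerivBounds.criticalMassBound (hf : DerivBounds f I r L C) (hr : r ≠ 0)
    (hα : α * (r + 1) = 2) (hK : 0 ≤ K) (hg : HasHolderMass g I K α) {M : ℝ} (hM : 0 ≤ M)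
    (hgM : ∀ y ∈ I, g y ≤ ENNReal.ofReal M) :
    CriticalMassBound f g I r (4 * (r * (K * C ^ α))) := by
  have hC := hf.nonneg
  have hdyadic : ∀ d : ℕ, CriticalMassBound f g I r (4 * (r * (K * C ^ α)) + C * M / 2 ^ d) := by
    intro d
    induction d with
    | zero =>
      intro u v huv huv1 hI hcrit
      refine (hf.criticalMassBound_mul hr hM hgM huv huv1 hI hcrit).trans
        (ENNReal.ofReal_le_ofReal ?_)
      gcongr
      simpa using (by positivity : 0 ≤ 4 * (r * (K * C ^ α)))
    | succ d ih =>
      convert ih.halve hf hα hK hg (by positivity) using 1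
      ring
  intro u v huv huv1 hI hcrit
  have hlim : Tendsto (fun d : ℕ => ENNReal.ofReal
      ((4 * (r * (K * C ^ α)) + C * M / 2 ^ d) * (v - u) ^ 2)) atTop
      (𝓝 (ENNReal.ofReal ((4 * (r * (K * C ^ α)) + 0) * (v - u) ^ 2))) :=
    ENNReal.tendsto_ofReal <| ((tendsto_const_nhds.div_atTop
      (tendsto_pow_atTop_atTop_of_one_lt one_lt_two)).const_add _).mul_const _
  simpa only [add_zero] using ge_of_tendsto' hlim fun d => hdyadic d huv huv1 hI hcrit

theorem mem_Ioc_of_mul_eq_two (hr : r ≠ 0) (hα : α * (r + 1) = 2) : α ∈ Ioc 0 1 := by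
  have hr1 : (1 : ℝ) ≤ r := by exact_mod_cast Nat.one_le_iff_ne_zero.2 hr
  constructor
  · by_contra! h
    nlinarith
  · by_contra! h
    nlinarith

theorem DerivBounds.lintegral_comp_le (hf : DerivBounds f I r L C) (hr : r ≠ 0)
    (hα : α * (r + 1) = 2) (hK : 0 ≤ K) (hg : HasHolderMass g I K α) {M : ℝ} (hM : 0 ≤ M)
    (hgM : ∀ y ∈ I, g y ≤ ENNReal.ofReal M) (huv : u ≤ v) (huv1 : v - u ≤ 1)
    (hsmall : 4 * (r * C ^ α) * (v - u) ^ α ≤ 1) (hI : Icc u v ⊆ I) :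
    ∫⁻ y in Icc u v, ENNReal.ofReal |deriv f y| * g (f y) ≤
      ENNReal.ofReal (K * L ^ α * (v - u) ^ α) := by
  have hC := hf.nonneg
  have hL := hf.one_le
  obtain ⟨hα0, hα1⟩ := mem_Ioc_of_mul_eq_two hr hα
  have hl : 0 ≤ v - u := sub_nonneg.2 huv
  have hmaps : MapsTo f (Icc u v) I := hf.mapsTo.mono_left hI
  have hlα : v - u ≤ (v - u) ^ α := by
    simpa using Real.rpow_le_rpow_of_exponent_ge' hl huv1 hα0.le hα1
  have hKL : K * (v - u) ^ α ≤ K * L ^ α * (v - u) ^ α := by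
    gcongr
    exact le_mul_of_one_le_right hK (Real.one_le_rpow hL hα0.le)
  rcases Set.eq_empty_or_nonempty {y ∈ Icc u v | deriv f y = 0} with hnone | hsome
  · refine (hg.lintegral_comp_le hK hα0.le hf.differentiable huv hmaps
      (fun x hx hx0 => (hnone ▸ ⟨Ioo_subset_Icc_self hx, hx0⟩ : x ∈ (∅ : Set ℝ)))
      fun y hy => hf.abs_deriv_le y (hI hy)).trans_eq ?_
    rw [Real.mul_rpow (by linarith) hl, mul_assoc]
  rcases le_or_gt (r : ℕ∞) {y ∈ Icc u v | deriv f y = 0}.encard with hmany | hfew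
  · refine (hf.criticalMassBound hr hα hK hg hM hgM huv huv1 hI hmany).trans
      (ENNReal.ofReal_le_ofReal (le_trans ?_ hKL))
    calc 4 * (r * (K * C ^ α)) * (v - u) ^ 2
        = 4 * (r * C ^ α) * (v - u) * (K * (v - u)) := by ring
      _ ≤ 4 * (r * C ^ α) * (v - u) ^ α * (K * (v - u) ^ α) := by gcongr
      _ ≤ 1 * (K * (v - u) ^ α) := by gcongr
      _ = K * (v - u) ^ α := one_mul _
  · refine (hg.lintegral_comp_le_of_encard_lt hK hα0.le hf.differentiable huv hmaps hfew
      (hf.abs_deriv_le_mul hr hI hsome)).trans (ENNReal.ofReal_le_ofReal (le_trans ?_ hKL))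
    calc r * (K * (C * (v - u) * (v - u)) ^ α)
        = r * C ^ α * (v - u) ^ α * (K * (v - u) ^ α) := by
          rw [Real.mul_rpow (by positivity) hl, Real.mul_rpow hC hl]; ring
      _ ≤ 1 * (K * (v - u) ^ α) := by
          gcongr
          have : 0 ≤ r * C ^ α * (v - u) ^ α := by positivity
          linarith
      _ = K * (v - u) ^ α := one_mul _

end Yomdin

end CriticalMass

section DerivativeGrowth

theorem deriv_iterate_succ {f : ℝ → ℝ} (hf : Differentiable ℝ f) (m : ℕ) (y : ℝ) :
    deriv f^[m + 1] y = deriv f^[m] (f y) * deriv f y := by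
  rw [Function.iterate_succ, deriv_comp _ (hf.iterate m _) (hf y)]

theorem abs_deriv_iterate_le_pow {f : ℝ → ℝ} (hf : Differentiable ℝ f) {I : Set ℝ}
    (hmaps : MapsTo f I I) {L : ℝ} (hL : ∀ y ∈ I, |deriv f y| ≤ L) (m : ℕ) :
    ∀ y ∈ I, |deriv f^[m] y| ≤ L ^ m := by
  induction m with
  | zero => simp
  | succ m ih =>
    intro y hy
    rw [deriv_iterate_succ hf, abs_mul, pow_succ]
    exact mul_le_mul (ih _ (hmaps hy)) (hL y hy) (abs_nonneg _)
      ((abs_nonneg _).trans (ih y hy))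

theorem contDiff_iterate {n : WithTop ℕ∞} {f : ℝ → ℝ} (hf : ContDiff ℝ n f) (m : ℕ) :
    ContDiff ℝ n f^[m] := by
  induction m with
  | zero => exact contDiff_id
  | succ m ih => exact ih.comp hf

theorem continuous_abs_deriv_iterate {f : ℝ → ℝ} (hf : ContDiff ℝ 1 f) (m : ℕ) :
    Continuous fun y => |deriv f^[m] y| :=
  ((contDiff_iterate hf m).continuous_deriv le_rfl).abs

theorem HasHolderMass.indicator_closedBall {φ : ℝ → ℝ≥0∞} {I : Set ℝ} {K α x ε : ℝ} (hK : 0 ≤ K)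
    (hα : 0 ≤ α)
    (hφ : ∀ u v, u ≤ v → v - u ≤ 2 * ε → Icc u v ⊆ I →
      ∫⁻ y in Icc u v, φ y ≤ ENNReal.ofReal (K * (v - u) ^ α)) :
    HasHolderMass ((Metric.closedBall x ε).indicator φ) I K α := by
  intro u v _ hI
  rw [setLIntegral_indicator Metric.isClosed_closedBall.measurableSet, Real.closedBall_eq_Icc,
    Icc_inter_Icc]
  set u' := max (x - ε) u
  set v' := min (x + ε) v
  have hu : x - ε ≤ u' ∧ u ≤ u' := max_le_iff.1 le_rfl
  have hv : v' ≤ x + ε ∧ v' ≤ v := le_min_iff.1 le_rfl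
  rcases le_or_gt u' v' with huv' | hvu'
  · refine (hφ u' v' huv' (by linarith) ((Icc_subset_Icc hu.2 hv.2).trans hI)).trans
      (ENNReal.ofReal_le_ofReal ?_)
    gcongr
    exacts [hv.2, hu.2]
  · simp [Icc_eq_empty_of_lt hvu']

/-- The function `|(f ^ m)'|` restricted to the set of points whose orbit `ε`-shadows `c` up to time
`m`. -/
def orbitWeight (f : ℝ → ℝ) (ε : ℝ) (m : ℕ) (c : ℕ → ℝ) : ℝ → ℝ≥0∞ :=
  {y | ∀ s ≤ m, f^[s] y ∈ Metric.closedBall (c s) ε}.indicator fun y =>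
    ENNReal.ofReal |deriv f^[m] y|

theorem orbitWeight_zero (f : ℝ → ℝ) (ε : ℝ) (c : ℕ → ℝ) :
    orbitWeight f ε 0 c = (Metric.closedBall (c 0) ε).indicator 1 := by
  ext y
  simp [orbitWeight, indicator]

theorem orbitWeight_succ {f : ℝ → ℝ} (hf : Differentiable ℝ f) (ε : ℝ) (m : ℕ) (c : ℕ → ℝ) :
    orbitWeight f ε (m + 1) c = (Metric.closedBall (c 0) ε).indicator fun y =>
      ENNReal.ofReal |deriv f y| * orbitWeight f ε m (fun s => c (s + 1)) (f y) := by
  ext y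
  have hset : (∀ s ≤ m + 1, f^[s] y ∈ Metric.closedBall (c s) ε) ↔
      y ∈ Metric.closedBall (c 0) ε ∧
        ∀ s ≤ m, f^[s] (f y) ∈ Metric.closedBall (c (s + 1)) ε := by
    refine ⟨fun h => ⟨h 0 (by omega), fun s hs => h (s + 1) (by omega)⟩, fun h s hs => ?_⟩
    cases s with
    | zero => exact h.1
    | succ s => exact h.2 s (by omega)
  have hderiv : ENNReal.ofReal |deriv f^[m + 1] y| =
      ENNReal.ofReal |deriv f y| * ENNReal.ofReal |deriv f^[m] (f y)| := by
    rw [deriv_iterate_succ hf, mul_comm, abs_mul, ENNReal.ofReal_mul (abs_nonneg _)]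
  classical
  simp only [orbitWeight, indicator_apply, mem_ofPred_eq, hset, ite_and, hderiv, mul_ite, mul_zero]

theorem measurable_orbitWeight {f : ℝ → ℝ} (hf : ContDiff ℝ 1 f) (ε : ℝ) (m : ℕ) (c : ℕ → ℝ) :
    Measurable (orbitWeight f ε m c) := by
  refine (continuous_abs_deriv_iterate hf m).measurable.ennreal_ofReal.indicator ?_
  simp only [ofPred_forall]
  exact MeasurableSet.iInter fun s => MeasurableSet.iInter fun _ =>
    (Metric.isClosed_closedBall.preimage (hf.continuous.iterate s)).measurableSet

theorem DerivBounds.hasHolderMass_orbitWeight {f : ℝ → ℝ} {I : Set ℝ} {r : ℕ} {L C α ε : ℝ}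
    (hf : DerivBounds f I r L C) (hr : r ≠ 0) (hα : α * (r + 1) = 2) (hε : 2 * ε ≤ 1)
    (hsmall : 4 * (r * C ^ α) * (2 * ε) ^ α ≤ 1) (m : ℕ) (c : ℕ → ℝ) :
    HasHolderMass (orbitWeight f ε m c) I ((L ^ α) ^ m) α := by
  obtain ⟨hα0, hα1⟩ := mem_Ioc_of_mul_eq_two hr hα
  have hC := hf.nonneg
  have hL : 0 ≤ L := zero_le_one.trans hf.one_le
  induction m generalizing c with
  | zero =>
    rw [orbitWeight_zero]
    refine .indicator_closedBall (by positivity) hα0.le fun u v huv hlen _ => ?_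
    simp only [Pi.one_apply, setLIntegral_one, Real.volume_Icc, pow_zero, one_mul]
    refine ENNReal.ofReal_le_ofReal ?_
    simpa using Real.rpow_le_rpow_of_exponent_ge' (sub_nonneg.2 huv) (hlen.trans hε) hα0.le hα1
  | succ m ih =>
    rw [orbitWeight_succ hf.differentiable]
    refine .indicator_closedBall (by positivity) hα0.le fun u v huv hlen hI => ?_
    have hbound : ∀ y ∈ I, orbitWeight f ε m (fun s => c (s + 1)) y ≤ ENNReal.ofReal (L ^ m) :=
      fun y hy => (indicator_le_self _ _ y).trans <| ENNReal.ofReal_le_ofReal <|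
        abs_deriv_iterate_le_pow hf.differentiable hf.mapsTo hf.abs_deriv_le m y hy
    rw [pow_succ]
    refine hf.lintegral_comp_le hr hα (by positivity) (ih _) (by positivity) hbound huv
      (hlen.trans hε) (le_trans ?_ hsmall) hI
    have := sub_nonneg.2 huv
    gcongr

theorem DerivBounds.integral_abs_deriv_iterate_le {f : ℝ → ℝ} {a b : ℝ} (hab : a ≤ b) {r : ℕ}
    {L C α ε : ℝ} (hf : DerivBounds f (Icc a b) r L C) (hr : r ≠ 0) (hα : α * (r + 1) = 2)
    (hε : 2 * ε ≤ 1) (hsmall : 4 * (r * C ^ α) * (2 * ε) ^ α ≤ 1) {m : ℕ} {A : Finset ℝ}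
    (hA : ∀ y ∈ Icc a b, ∃ c ∈ A, ∀ s ≤ m, |f^[s] y - f^[s] c| ≤ ε) :
    ∫ y in a..b, |deriv f^[m] y| ≤ A.card * ((L ^ α) ^ m * (b - a) ^ α) := by
  have hf1 : ContDiff ℝ 1 f := hf.contDiff.of_le (by simp)
  have hL : 0 ≤ L := zero_le_one.trans hf.one_le
  have := sub_nonneg.2 hab
  rw [intervalIntegral.integral_of_le hab, ← integral_Icc_eq_integral_Ioc,
    ← ENNReal.ofReal_le_ofReal_iff (by positivity), ofReal_integral_eq_lintegral_ofReal
      (continuous_abs_deriv_iterate hf1 m).continuousOn.integrableOn_Icc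
      (Eventually.of_forall fun y => abs_nonneg _)]
  calc ∫⁻ y in Icc a b, ENNReal.ofReal |deriv f^[m] y|
      ≤ ∫⁻ y in Icc a b, ∑ c ∈ A, orbitWeight f ε m (fun s => f^[s] c) y := by
        refine setLIntegral_mono' measurableSet_Icc fun y hy => ?_
        obtain ⟨c, hc, hcy⟩ := hA y hy
        have hmem : y ∈ {y | ∀ s ≤ m, f^[s] y ∈ Metric.closedBall (f^[s] c) ε} := hcy
        calc _ = orbitWeight f ε m (fun s => f^[s] c) y := by
              rw [orbitWeight, indicator_of_mem hmem]
          _ ≤ _ := Finset.single_le_sum (f := fun c => orbitWeight f ε m (fun s => f^[s] c) y)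
            (fun _ _ => zero_le) hc
    _ = ∑ c ∈ A, ∫⁻ y in Icc a b, orbitWeight f ε m (fun s => f^[s] c) y :=
        lintegral_finsetSum _ fun c _ => measurable_orbitWeight hf1 ε m _
    _ ≤ ∑ _c ∈ A, ENNReal.ofReal ((L ^ α) ^ m * (b - a) ^ α) :=
        Finset.sum_le_sum fun c _ => hf.hasHolderMass_orbitWeight hr hα hε hsmall m _ hab subset_rfl
    _ = ENNReal.ofReal (A.card * ((L ^ α) ^ m * (b - a) ^ α)) := by
        rw [Finset.sum_const, nsmul_eq_mul, ENNReal.ofReal_mul A.card.cast_nonneg,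
          ENNReal.ofReal_natCast]

end DerivativeGrowth

/-! ### Covering numbers and topological entropy -/

section Entropy

open Dynamics ExpGrowth

-- The maximum absorbs the junk value `elog 0 = 0`.
theorem elog_eq_log (k : ℕ∞) : elog k = ENNReal.log ((max k 1 : ℕ∞) : ℝ≥0∞) := by
  induction k using ENat.recTopCoe with
  | top =>
    have htop : elog ⊤ = ⊤ := rfl
    simp [htop]
  | coe k =>
    have hk : (0 : ℝ) < (max k 1 : ℕ) := by positivity
    have hmax : max (k : ℕ∞) 1 = (max k 1 : ℕ) := by norm_cast
    have hlog : Real.log k = Real.log (max k 1 : ℕ) := by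
      rcases Nat.eq_zero_or_pos k with rfl | hk
      · simp
      · rw [max_eq_left hk]
    rw [hmax, ENat.toENNReal_coe, ← ENNReal.ofReal_natCast, ENNReal.log_ofReal_of_pos hk, ← hlog]
    rfl

theorem limsup_elog_eq_expGrowthSup (u : ℕ → ℕ∞) :
    atTop.limsup (fun n : ℕ => (((n : ℝ)⁻¹ : ℝ) : EReal) * elog (u n)) =
      expGrowthSup fun n => ((max (u n) 1 : ℕ∞) : ℝ≥0∞) := by
  simp only [expGrowthSup, elog_eq_log, EReal.div_eq_inv_mul, EReal.coe_inv, EReal.coe_natCast]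

variable {X : Type*} [MetricSpace X]

theorem coverNum_univ (f : X → X) (ε : ℝ) (n : ℕ) :
    coverNum f ε n univ = coverMincard f univ {p | dist p.1 p.2 < ε} n := by
  have hcover : ∀ s : Finset X, univ ⊆ ⋃ x ∈ s, dynBall f ε n x ↔
      IsDynCoverOf f univ {p | dist p.1 p.2 < ε} n s := fun s => by
    simp [IsDynCoverOf, SetRel.IsCover, dynBall, subset_def, mem_dynEntourage]
  refine le_antisymm (le_iInf₂ fun s hs => sInf_le ⟨s, subset_univ _, (hcover s).2 hs, rfl⟩)
    (le_sInf ?_)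
  rintro _ ⟨s, -, hs, rfl⟩
  exact ((hcover s).1 hs).coverMincard_le_card

theorem htop_eq_coverEntropy [Nonempty X] (f : X → X) : htop f = coverEntropy f univ := by
  have hmax : ∀ (ε : ℝ) (n : ℕ), max (coverMincard f univ {p | dist p.1 p.2 < ε} n) 1 =
      coverMincard f univ {p | dist p.1 p.2 < ε} n := fun ε n =>
    max_eq_left ((one_le_coverMincard_iff _ _ _ _).2 univ_nonempty)
  simp only [coverEntropy_eq_iSup_basis Metric.uniformity_basis_dist, htop, entSet,
    limsup_elog_eq_expGrowthSup, coverNum_univ, hmax, iSup_subtype, coverEntropyEntourage]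

theorem htop_restrict_eq_coverEntropy {f : X → X} {s : Set X} (hs : s.Nonempty)
    (hf : MapsTo f s s) : htop (hf.restrict f s s) = coverEntropy f s := by
  have := hs.to_subtype
  rw [htop_eq_coverEntropy, coverEntropy_restrict]

theorem coverNum_le_card_of_coloring {f : X → X} {ε : ℝ} {n : ℕ} {S : Set X} {ι : Type*}
    {B : Finset ι} {col : X → ι} (hcol : MapsTo col S B)
    (h : ∀ x ∈ S, ∀ y ∈ S, col x = col y → ∀ s < n, dist (f^[s] x) (f^[s] y) < ε) :
    coverNum f ε n S ≤ B.card := by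
  obtain ⟨T, hTS, hT⟩ := S.exists_subset_bijOn col
  have hTB : MapsTo col T B := hcol.mono_left hTS
  have hfin : T.Finite := B.finite_toSet.of_injOn hTB hT.injOn
  have hcover : S ⊆ ⋃ x ∈ hfin.toFinset, dynBall f ε n x := fun y hy => by
    obtain ⟨x, hx, hxy⟩ := hT.surjOn (mem_image_of_mem col hy)
    exact mem_biUnion (hfin.mem_toFinset.2 hx) (h y hy x (hTS hx) hxy.symm)
  calc coverNum f ε n S ≤ hfin.toFinset.card :=
        sInf_le ⟨hfin.toFinset, by simpa using hTS, hcover, rfl⟩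
    _ ≤ B.card := by
        exact_mod_cast Finset.card_le_card_of_injOn col (by simpa using hTB)
          (by simpa using hT.injOn)

theorem unifEntColl_le {f : X → X} {D : Set (Set X)} {c : ℝ} (hc : 0 ≤ c)
    (h : ∀ ε > 0, ∃ C : ℝ, ∀ n : ℕ, ∀ S ∈ D, ∃ k : ℕ,
      coverNum f ε n S ≤ k ∧ k ≤ C * Real.exp (c * n)) :
    unifEntColl f D ≤ c := by
  refine iSup_le fun ⟨ε, hε⟩ => ?_
  obtain ⟨C, hC⟩ := h ε hε
  rw [limsup_elog_eq_expGrowthSup]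
  refine (expGrowthSup_le_of_eventually_le (b := ENNReal.ofReal (max C 1))
    (v := fun n => EReal.exp (c * n)) ENNReal.ofReal_ne_top
    (Eventually.of_forall fun n => ?_)).trans expGrowthSup_exp.le
  have hone : 1 ≤ Real.exp (c * n) := Real.one_le_exp (by positivity)
  rw [← EReal.coe_natCast, ← EReal.coe_mul, EReal.exp_coe, ← ENNReal.ofReal_mul (by positivity)]
  have hfloor : max (supCoverNum f ε n D) 1 ≤ (⌊max C 1 * Real.exp (c * n)⌋₊ : ℕ∞) := by
    refine max_le (iSup₂_le fun S hS => ?_) ?_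
    · obtain ⟨k, hk, hkC⟩ := hC n S hS
      refine hk.trans (Nat.cast_le.2 (Nat.le_floor (hkC.trans ?_)))
      gcongr
      exact le_max_left _ _
    · have hfloor := one_le_mul_of_one_le_of_one_le (le_max_right C 1) hone
      exact_mod_cast Nat.le_floor (by exact_mod_cast hfloor)
  calc ((max (supCoverNum f ε n D) 1 : ℕ∞) : ℝ≥0∞)
      ≤ ((⌊max C 1 * Real.exp (c * n)⌋₊ : ℕ∞) : ℝ≥0∞) := by exact_mod_cast hfloor
    _ = ENNReal.ofReal ⌊max C 1 * Real.exp (c * n)⌋₊ := by simp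
    _ ≤ ENNReal.ofReal (max C 1 * Real.exp (c * n)) := by
        gcongr
        exact Nat.floor_le (by positivity)

theorem dist_lt_of_natFloor_eq {a x y η : ℝ} (hη : 0 < η) (hx : a ≤ x) (hy : a ≤ y)
    (h : ⌊(x - a) / η⌋₊ = ⌊(y - a) / η⌋₊) : dist x y < η := by
  have hx' := Nat.floor_le (div_nonneg (sub_nonneg.2 hx) hη.le)
  have hy' := Nat.floor_le (div_nonneg (sub_nonneg.2 hy) hη.le)
  have hx'' := Nat.lt_floor_add_one ((x - a) / η)
  have hy'' := Nat.lt_floor_add_one ((y - a) / η)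
  rw [h] at hx' hx''
  have habs : |(x - a) / η - (y - a) / η| < 1 := abs_sub_lt_iff.2 ⟨by linarith, by linarith⟩
  rwa [← sub_div, sub_sub_sub_cancel_right, abs_div, abs_of_pos hη, div_lt_one hη] at habs

theorem htop_le_log_of_lipschitzWith {a b : ℝ} (hab : a ≤ b) {g : Icc a b → Icc a b} {K : ℝ≥0}
    (hK : 1 ≤ K) (hg : LipschitzWith K g) : htop g ≤ Real.log K := by
  have hunif : htop g = unifEntColl g {univ} := by
    simp [htop, entSet, unifEntColl, supCoverNum]
  rw [hunif]
  refine unifEntColl_le (Real.log_nonneg hK) fun ε hε => ⟨(b - a) / ε + 1, ?_⟩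
  rintro n _ rfl
  set η := ε / K ^ n
  have hη : 0 < η := by positivity
  refine ⟨(Finset.range (⌊(b - a) / η⌋₊ + 1)).card, ?_, ?_⟩
  · refine coverNum_le_card_of_coloring (col := fun y => ⌊(y - a) / η⌋₊) (fun y _ => ?_)
      fun x _ y _ hxy s hs => ?_
    · rw [Finset.mem_coe, Finset.mem_range, Nat.lt_succ_iff]
      exact Nat.floor_mono (by gcongr; exact y.2.2)
    · calc dist (g^[s] x) (g^[s] y) ≤ K ^ s * dist x y := by
            exact_mod_cast (hg.iterate s).dist_le_mul x y
        _ ≤ K ^ n * dist x y := by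
            gcongr
        _ < K ^ n * η := by
            gcongr
            exact dist_lt_of_natFloor_eq hη x.2.1 y.2.1 hxy
        _ = ε := by simp only [η]; field_simp
  · have hab' := sub_nonneg.2 hab
    have hone : (1 : ℝ) ≤ K ^ n := one_le_pow₀ hK
    rw [Finset.card_range, Real.exp_mul, Real.exp_log (by positivity), Real.rpow_natCast]
    push_cast
    calc (⌊(b - a) / η⌋₊ : ℝ) + 1 ≤ (b - a) / η + K ^ n :=
          add_le_add (Nat.floor_le (by positivity)) hone
      _ = ((b - a) / ε + 1) * K ^ n := by simp only [η]; field_simp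

theorem eventually_exists_cover_of_coverEntropy_lt {f : X → X} {F : Set X} {c : ℝ}
    (h : coverEntropy f F < c) {ε : ℝ} (hε : 0 < ε) :
    ∀ᶠ n : ℕ in atTop, ∃ A : Finset X, (A.card : ℝ) ≤ Real.exp (c * n) ∧
      ∀ y ∈ F, ∃ x ∈ A, ∀ s < n, dist (f^[s] y) (f^[s] x) < ε := by
  have hlt := (coverEntropyEntourage_le_coverEntropy f F (Metric.dist_mem_uniformity hε)).trans_lt h
  filter_upwards [eventually_le_exp hlt] with n hn
  rw [← EReal.coe_natCast, ← EReal.coe_mul, EReal.exp_coe] at hn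
  have hfin : coverMincard f F {p | dist p.1 p.2 < ε} n < ⊤ := by
    exact_mod_cast hn.trans_lt ENNReal.ofReal_lt_top
  obtain ⟨A, hA, hcard⟩ := (coverMincard_finite_iff ..).1 hfin
  refine ⟨A, ?_, fun y hy => ?_⟩
  · rw [← hcard, ENat.toENNReal_coe, ← ENNReal.ofReal_natCast] at hn
    exact (ENNReal.ofReal_le_ofReal_iff (Real.exp_pos _).le).1 hn
  · obtain ⟨x, hx, hyx⟩ := hA hy
    exact ⟨x, hx, by simpa [mem_dynEntourage] using hyx⟩

end Entropy

section ProductEntropy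

open Dynamics ExpGrowth
open scoped Uniformity

theorem exists_isDynNetIn_of_lt_coverEntropy {X : Type*} [UniformSpace X] {T : X → X} {F : Set X}
    (hT : MapsTo T F F) {c : ℝ} (hc : c < coverEntropy T F) :
    ∃ U ∈ 𝓤 X, ∀ᶠ n : ℕ in atTop, ∃ s : Finset X, IsDynNetIn T F U n s ∧
      Real.exp (c * n) ≤ s.card := by
  rw [← coverEntropyInf_eq_coverEntropy T hT, coverEntropyInf_eq_iSup_netEntropyInfEntourage] at hc
  obtain ⟨U, hU, hcU⟩ := by simpa only [lt_iSup_iff] using hc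
  refine ⟨U, hU, ?_⟩
  obtain ⟨d, hcd, hdU⟩ := EReal.lt_iff_exists_real_btwn.1 hcU
  filter_upwards [eventually_exp_le hdU, eventually_gt_atTop 0] with n hn hpos
  rw [← EReal.coe_natCast, ← EReal.coe_mul, EReal.exp_coe] at hn
  have hexp : Real.exp (c * n) < Real.exp (d * n) := by
    gcongr
    exact EReal.coe_lt_coe_iff.1 hcd
  by_contra! hsmall
  have hfloor : netMaxcard T F U n ≤ (⌊Real.exp (c * n)⌋₊ : ℕ∞) :=
    iSup₂_le fun s hs => Nat.cast_le.2 (Nat.le_floor (hsmall s hs).le)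
  have hle : ENNReal.ofReal (Real.exp (d * n)) ≤ ENNReal.ofReal (Real.exp (c * n)) :=
    calc _ ≤ ((⌊Real.exp (c * n)⌋₊ : ℕ∞) : ℝ≥0∞) := hn.trans (ENat.toENNReal_le.2 hfloor)
      _ = ENNReal.ofReal ⌊Real.exp (c * n)⌋₊ := by simp
      _ ≤ _ := ENNReal.ofReal_le_ofReal (Nat.floor_le (Real.exp_pos _).le)
  exact hexp.not_ge ((ENNReal.ofReal_le_ofReal_iff (Real.exp_pos _).le).1 hle)

variable {ι : Type*} [Fintype ι] {X : ι → Type*}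

theorem isDynNetIn_piFinset [DecidableEq ι] {T : ∀ i, X i → X i} {F : ∀ i, Set (X i)}
    {U : ∀ i, SetRel (X i) (X i)} {n : ℕ} {s : ∀ i, Finset (X i)}
    (hs : ∀ i, IsDynNetIn (T i) (F i) (U i) n (s i)) :
    IsDynNetIn (Pi.map T) (univ.pi F) {p | ∀ i, (p.1 i, p.2 i) ∈ U i} n
      (Fintype.piFinset s : Set (∀ i, X i)) := by
  refine ⟨fun x hx i _ => (hs i).1 (Fintype.mem_piFinset.1 hx i), fun x hx y hy hxy => ?_⟩
  obtain ⟨i, hi⟩ := Function.ne_iff.1 hxy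
  have hproj : ∀ w z : ∀ i, X i, z ∈ UniformSpace.ball w (dynEntourage (Pi.map T)
      {p | ∀ i, (p.1 i, p.2 i) ∈ U i} n) →
      z i ∈ UniformSpace.ball (w i) (dynEntourage (T i) (U i) n) := by
    simp only [mem_ball_dynEntourage, Pi.map_iterate]
    exact fun w z h k hk => h k hk i
  exact disjoint_left.2 fun z hzx hzy => disjoint_left.1
    ((hs i).2 (Fintype.mem_piFinset.1 hx i) (Fintype.mem_piFinset.1 hy i) hi)
    (hproj x z hzx) (hproj y z hzy)

variable [∀ i, UniformSpace (X i)] {T : ∀ i, X i → X i} {F : ∀ i, Set (X i)}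

theorem sum_le_coverEntropy_pi_of_lt (hT : ∀ i, MapsTo (T i) (F i) (F i)) {c : ι → ℝ}
    (hc : ∀ i, c i < coverEntropy (T i) (F i)) :
    ((∑ i, c i : ℝ) : EReal) ≤ coverEntropy (Pi.map T) (univ.pi F) := by
  classical
  choose U hU hnet using fun i => exists_isDynNetIn_of_lt_coverEntropy (hT i) (hc i)
  have hUpi : {p : (∀ i, X i) × (∀ i, X i) | ∀ i, (p.1 i, p.2 i) ∈ U i} ∈ 𝓤 (∀ i, X i) := by
    simp only [ofPred_forall]
    exact iInter_mem.2 fun i => Pi.uniformContinuous_proj _ i (hU i)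
  refine le_trans (Eventually.le_expGrowthInf ?_)
    ((netEntropyInfEntourage_le_coverEntropyInf _ _ hUpi).trans
      (coverEntropyInf_le_coverEntropy _ _))
  filter_upwards [eventually_all.2 hnet] with n hn
  choose s hs hcard using hn
  calc EReal.exp ((∑ i, c i : ℝ) * n) = ENNReal.ofReal (∏ i, Real.exp (c i * n)) := by
        rw [← EReal.coe_natCast, ← EReal.coe_mul, EReal.exp_coe, Finset.sum_mul, Real.exp_sum]
    _ ≤ ENNReal.ofReal (∏ i, ((s i).card : ℝ)) := by
        gcongr
        exact hcard _
    _ = ((Fintype.piFinset s).card : ℕ∞) := by simp [← Nat.cast_prod, Fintype.card_piFinset]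
    _ ≤ netMaxcard (Pi.map T) (univ.pi F) _ n :=
        ENat.toENNReal_le.2 (isDynNetIn_piFinset hs).card_le_netMaxcard

theorem sum_le_coverEntropy_pi (hT : ∀ i, MapsTo (T i) (F i) (F i)) {h : ι → ℝ}
    (hh : ∀ i, h i ≤ coverEntropy (T i) (F i)) :
    ((∑ i, h i : ℝ) : EReal) ≤ coverEntropy (Pi.map T) (univ.pi F) := by
  refine EReal.ge_of_forall_gt_iff_ge.1 fun c hc => ?_
  rw [EReal.coe_lt_coe_iff] at hc
  set δ := (∑ i, h i - c) / (Fintype.card ι + 1)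
  have hδ : 0 < δ := div_pos (sub_pos.2 hc) (by positivity)
  have hsum : c ≤ ∑ i, (h i - δ) := by
    have : δ * (Fintype.card ι + 1) = ∑ i, h i - c := div_mul_cancel₀ _ (by positivity)
    rw [Finset.sum_sub_distrib, Finset.sum_const, Finset.card_univ, nsmul_eq_mul]
    linarith
  exact (EReal.coe_le_coe_iff.2 hsum).trans <| sum_le_coverEntropy_pi_of_lt hT fun i =>
    (EReal.coe_lt_coe_iff.2 (sub_lt_self _ hδ)).trans_le (hh i)

end ProductEntropy

/-! ### Grids adapted to the dynamics -/

section DynamicalGrids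

open Dynamics

theorem exists_derivBounds {f : ℝ → ℝ} {a b : ℝ} (hmaps : MapsTo f (Icc a b) (Icc a b)) {L : ℝ}
    (hL1 : 1 ≤ L) (hL : ∀ y ∈ Icc a b, |deriv f y| ≤ L) {r : ℕ} (hr : r ≠ 0)
    (hf : ContDiff ℝ (r + 1) f) : ∃ C, DerivBounds f (Icc a b) r L C := by
  have hbound : ∀ k ≤ r + 1, ∃ C, ∀ y ∈ Icc a b, |iteratedDeriv k f y| ≤ C := fun k hk =>
    isCompact_Icc.exists_bound_of_continuousOn
      (hf.continuous_iteratedDeriv k (by exact_mod_cast hk)).continuousOn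
  obtain ⟨C₂, hC₂⟩ := hbound 2 (by omega)
  obtain ⟨C, hC⟩ := hbound (r + 1) le_rfl
  exact ⟨max 0 (max C₂ C), hf, hmaps, hL1, le_max_left _ _, hL,
    fun y hy => (hC₂ y hy).trans ((le_max_left _ _).trans (le_max_right _ _)),
    fun y hy => (hC y hy).trans ((le_max_right _ _).trans (le_max_right _ _))⟩

theorem exists_pos_mul_rpow_le_one (M : ℝ) {α : ℝ} (hα : 0 < α) :
    ∃ ε > 0, 2 * ε ≤ 1 ∧ M * (2 * ε) ^ α ≤ 1 := by
  have hlin : Tendsto (fun ε : ℝ => 2 * ε) (𝓝[>] 0) (𝓝 0) :=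
    ((continuous_const_mul 2).tendsto' 0 0 (mul_zero 2)).mono_left nhdsWithin_le_nhds
  have hpow : Tendsto (fun ε : ℝ => M * (2 * ε) ^ α) (𝓝[>] 0) (𝓝 0) := by
    simpa [Real.zero_rpow hα.ne'] using (hlin.rpow_const (p := α) (Or.inr hα.le)).const_mul M
  obtain ⟨ε, hε, h⟩ := (eventually_mem_nhdsWithin.and ((hlin.eventually_le_const one_pos).and
    (hpow.eventually_le_const one_pos))).exists
  exact ⟨ε, hε, h⟩

-- Smoothness of high order `r` makes the loss `L ^ (2 m / (r + 1))` subexponential.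
theorem isBigO_integral_abs_deriv_iterate {f : ℝ → ℝ} (hf : ContDiff ℝ (⊤ : ℕ∞) f) {a b : ℝ}
    (hab : a ≤ b) (hmaps : MapsTo f (Icc a b) (Icc a b)) {c : ℝ}
    (hc : coverEntropy f (Icc a b) < c) :
    (fun m : ℕ => ∫ y in a..b, |deriv f^[m] y|) =O[atTop] fun m : ℕ => Real.exp (c * m) := by
  obtain ⟨c', hc', hlt⟩ := EReal.lt_iff_exists_real_btwn.1 hc
  have hδ : 0 < c - c' := sub_pos.2 (EReal.coe_lt_coe_iff.1 hlt)
  obtain ⟨L₀, hL₀⟩ := isCompact_Icc.exists_bound_of_continuousOn (s := Icc a b)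
    (hf.continuous_deriv (by simp)).continuousOn
  set L := max L₀ 1
  have hL : 0 < L := one_pos.trans_le (le_max_right _ _)
  obtain ⟨r, hr⟩ := exists_nat_gt (2 * Real.log L / (c - c'))
  obtain ⟨C, hfC⟩ := exists_derivBounds (r := r + 1) hmaps (le_max_right L₀ 1)
    (fun y hy => (hL₀ y hy).trans (le_max_left _ _)) r.succ_ne_zero
    (hf.of_le (by exact_mod_cast le_top))
  set α : ℝ := 2 / ((r + 1 : ℕ) + 1)
  obtain ⟨ε, hε, hε1, hsmall⟩ :=
    exists_pos_mul_rpow_le_one (4 * ((r + 1 : ℕ) * C ^ α)) (α := α) (by positivity)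
  have hLα : L ^ α ≤ Real.exp (c - c') := by
    rw [div_lt_iff₀ hδ] at hr
    rw [Real.rpow_def_of_pos hL, Real.exp_le_exp, mul_div_assoc', div_le_iff₀ (by positivity)]
    push_cast
    linarith
  refine .of_bound (Real.exp c' * (b - a) ^ α) ?_
  filter_upwards [(tendsto_add_atTop_nat 1).eventually
    (eventually_exists_cover_of_coverEntropy_lt hc' hε)] with m ⟨A, hcard, hA⟩
  have := sub_nonneg.2 hab
  rw [Real.norm_of_nonneg (intervalIntegral.integral_nonneg hab fun _ _ => abs_nonneg _),
    Real.norm_of_nonneg (Real.exp_pos _).le]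
  calc ∫ y in a..b, |deriv f^[m] y| ≤ A.card * ((L ^ α) ^ m * (b - a) ^ α) :=
        hfC.integral_abs_deriv_iterate_le hab r.succ_ne_zero (div_mul_cancel₀ _ (by positivity))
          hε1 hsmall fun y hy => (hA y hy).imp fun x hx =>
            ⟨hx.1, fun s hs => (hx.2 s (Nat.lt_succ_of_le hs)).le⟩
    _ ≤ Real.exp (c' * (m + 1 : ℕ)) * (Real.exp (c - c') ^ m * (b - a) ^ α) := by gcongr
    _ = Real.exp c' * (b - a) ^ α * Real.exp (c * m) := by
        rw [← Real.exp_nat_mul, mul_left_comm, ← mul_assoc, ← Real.exp_add, mul_right_comm,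
          ← Real.exp_add]
        push_cast
        ring_nf

theorem exists_equalMass_partition {W : ℝ → ℝ} (hW : Continuous W) (hW1 : ∀ y, 1 ≤ W y) (a b : ℝ)
    {ε : ℝ} (hε : 0 < ε) :
    ∃ p : ℕ → ℝ, StrictMono p ∧ (∀ l, ∫ y in p l..p (l + 1), W y = ε) ∧
      ∀ y ∈ Icc a b, ∃ l < ⌊(∫ y in a..b, W y) / ε⌋₊ + 1, y ∈ Icc (p l) (p (l + 1)) := by
  have hint : ∀ x y, IntervalIntegrable W volume x y := hW.intervalIntegrable
  set V : ℝ → ℝ := fun x => ∫ y in a..x, W y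
  have hVsub : ∀ x y, V y - V x = ∫ t in x..y, W t := fun x y =>
    intervalIntegral.integral_interval_sub_left (hint _ _) (hint _ _)
  have hVge : ∀ x y, x ≤ y → y - x ≤ V y - V x := fun x y hxy => by
    rw [hVsub, ← integral_one]
    exact intervalIntegral.integral_mono_on hxy (by simp) (hint _ _) fun t _ => hW1 t
  have hVa : V a = 0 := intervalIntegral.integral_same
  have hVmono : StrictMono V := fun x y hxy => by linarith [hVge x y hxy.le]
  have hVsurj : Function.Surjective V := by
    refine (intervalIntegral.continuous_primitive hint a).surjective
      (tendsto_atTop_mono' _ ?_ (tendsto_atTop_add_const_right _ (-a) tendsto_id))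
      (tendsto_atBot_mono' _ ?_ (tendsto_atBot_add_const_right _ (-a) tendsto_id))
    · filter_upwards [eventually_ge_atTop a] with x hx
      simpa [hVa, sub_eq_add_neg] using hVge a x hx
    · filter_upwards [eventually_le_atBot a] with x hx
      have := hVge x a hx
      simp only [id]
      linarith
  choose q hq using hVsurj
  have hq_le : ∀ t y, q t ≤ y ↔ t ≤ V y := fun t y => by rw [← hVmono.le_iff_le, hq]
  have hle_q : ∀ t y, y ≤ q t ↔ V y ≤ t := fun t y => by rw [← hVmono.le_iff_le, hq]
  refine ⟨fun l => q (l * ε), fun l l' hl => ?_, fun l => ?_, fun y hy => ?_⟩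
  · rw [← hVmono.lt_iff_lt, hq, hq]
    gcongr
  · rw [← hVsub, hq, hq]
    push_cast
    ring
  · have hVy : 0 ≤ V y := hVa ▸ hVmono.monotone hy.1
    refine ⟨⌊V y / ε⌋₊, Nat.lt_succ_of_le (Nat.floor_mono ?_), (hq_le _ _).2 ?_, (hle_q _ _).2 ?_⟩
    · exact div_le_div_of_nonneg_right (hVmono.monotone hy.2) hε.le
    · exact (le_div_iff₀ hε).1 (Nat.floor_le (by positivity))
    · rw [← div_le_iff₀ hε]
      exact_mod_cast (Nat.lt_floor_add_one _).le

/-- `p` and `N` cut the set `S` into `N` consecutive intervals, none of which is stretched beyond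
length `ε` by the first `m` iterates of `f`. -/
structure IsDynamicalGrid (f : ℝ → ℝ) (S : Set ℝ) (ε : ℝ) (m : ℕ) (p : ℕ → ℝ) (N : ℕ) : Prop where
  strictMono : StrictMono p
  exists_mem_Icc : ∀ y ∈ S, ∃ l < N, y ∈ Icc (p l) (p (l + 1))
  abs_iterate_sub_le : ∀ l, ∀ y ∈ Icc (p l) (p (l + 1)), ∀ y' ∈ Icc (p l) (p (l + 1)),
    ∀ s < m, |f^[s] y - f^[s] y'| ≤ ε

theorem abs_sub_le_integral_abs_deriv {g : ℝ → ℝ} (hg : ContDiff ℝ 1 g) {u v y y' : ℝ}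
    (hy : y ∈ Icc u v) (hy' : y' ∈ Icc u v) : |g y - g y'| ≤ ∫ t in u..v, |deriv g t| := by
  have hcont : Continuous (deriv g) := hg.continuous_deriv le_rfl
  rw [← intervalIntegral.integral_deriv_eq_sub
    (fun x _ => hg.differentiable one_ne_zero x) (hcont.intervalIntegrable _ _),
    intervalIntegral.integral_of_le (hy.1.trans hy.2)]
  refine intervalIntegral.norm_integral_le_integral_norm_uIoc.trans
    (setIntegral_mono_set hcont.norm.integrableOn_Ioc (.of_forall fun _ => norm_nonneg _)
      (Ioc_subset_Ioc (le_min hy'.1 hy.1) (max_le hy'.2 hy.2)).eventuallyLE)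

theorem sum_range_exp_mul_le {c : ℝ} (hc : 0 < c) (m : ℕ) :
    ∑ s ∈ Finset.range m, Real.exp (c * s) ≤ Real.exp (c * m) / (Real.exp c - 1) := by
  have hexp : 1 < Real.exp c := Real.one_lt_exp_iff.2 hc
  simp only [mul_comm c, Real.exp_nat_mul]
  rw [geom_sum_eq hexp.ne']
  have := sub_pos.2 hexp
  gcongr
  linarith

theorem integral_one_add_sum_le_mul_exp {g : ℕ → ℝ → ℝ} (hg : ∀ s, Continuous (g s)) {a b : ℝ}
    (hab : a ≤ b) {c C : ℝ} (hc : 0 < c) (hC : 0 ≤ C)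
    (h : ∀ s : ℕ, ∫ y in a..b, g s y ≤ C * Real.exp (c * s)) (m : ℕ) :
    ∫ y in a..b, 1 + ∑ s ∈ Finset.range m, g s y ≤
      ((b - a) + C / (Real.exp c - 1)) * Real.exp (c * m) := by
  have hone : 1 ≤ Real.exp (c * m) := Real.one_le_exp (by positivity)
  rw [intervalIntegral.integral_add (by simp)
    ((continuous_finsetSum _ fun s _ => hg s).intervalIntegrable _ _),
    intervalIntegral.integral_finsetSum fun s _ => (hg s).intervalIntegrable _ _, integral_one]
  calc b - a + ∑ s ∈ Finset.range m, ∫ y in a..b, g s y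
      ≤ (b - a) * Real.exp (c * m) + C * ∑ s ∈ Finset.range m, Real.exp (c * s) :=
        add_le_add (le_mul_of_one_le_right (sub_nonneg.2 hab) hone)
          ((Finset.sum_le_sum fun s _ => h s).trans_eq (Finset.mul_sum _ _ _).symm)
    _ ≤ (b - a) * Real.exp (c * m) + C * (Real.exp (c * m) / (Real.exp c - 1)) := by
        gcongr
        exact sum_range_exp_mul_le hc m
    _ = _ := by ring

theorem exists_isDynamicalGrid {f : ℝ → ℝ} (hf : ContDiff ℝ (⊤ : ℕ∞) f) {a b : ℝ}
    (hab : a ≤ b) (hmaps : MapsTo f (Icc a b) (Icc a b)) {c : ℝ} (hc : 0 < c)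
    (hent : coverEntropy f (Icc a b) < c) {ε : ℝ} (hε : 0 < ε) :
    ∃ C : ℝ, ∀ m : ℕ, ∃ p N, IsDynamicalGrid f (Icc a b) ε m p N ∧
      (N : ℝ) + 1 ≤ C * Real.exp (c * m) := by
  have hf1 : ContDiff ℝ 1 f := hf.of_le (by simp)
  obtain ⟨C, hCpos, hC⟩ :=
    Asymptotics.bound_of_isBigO_nat_atTop (isBigO_integral_abs_deriv_iterate hf hab hmaps hent)
  refine ⟨((b - a) + C / (Real.exp c - 1)) / ε + 2, fun m => ?_⟩
  set W : ℝ → ℝ := fun y => 1 + ∑ s ∈ Finset.range m, |deriv f^[s] y|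
  have hcont : ∀ s, Continuous fun y => |deriv f^[s] y| := continuous_abs_deriv_iterate hf1
  have hW : Continuous W := continuous_const.add (continuous_finsetSum _ fun s _ => hcont s)
  have hle_W : ∀ s < m, ∀ y, |deriv f^[s] y| ≤ W y := fun s hs y =>
    (Finset.single_le_sum (f := fun s => |deriv f^[s] y|) (fun _ _ => abs_nonneg _)
      (Finset.mem_range.2 hs)).trans (le_add_of_nonneg_left zero_le_one)
  obtain ⟨p, hp, hmass, hcover⟩ := exists_equalMass_partition hW
    (fun y => le_add_of_nonneg_right (Finset.sum_nonneg fun _ _ => abs_nonneg _)) a b hε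
  refine ⟨p, _, ⟨hp, hcover, fun l y hy y' hy' s hs => ?_⟩, ?_⟩
  · calc |f^[s] y - f^[s] y'| ≤ ∫ t in p l..p (l + 1), |deriv f^[s] t| :=
          abs_sub_le_integral_abs_deriv (contDiff_iterate hf1 s) hy hy'
      _ ≤ ∫ t in p l..p (l + 1), W t :=
          intervalIntegral.integral_mono (hp l.lt_succ_self).le
            ((hcont s).intervalIntegrable _ _) (hW.intervalIntegrable _ _) (hle_W s hs)
      _ = ε := hmass l
  · have hone : 1 ≤ Real.exp (c * m) := Real.one_le_exp (by positivity)
    have hWab : ∫ y in a..b, W y ≤ ((b - a) + C / (Real.exp c - 1)) * Real.exp (c * m) :=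
      integral_one_add_sum_le_mul_exp hcont hab hc hCpos.le (fun s => by
        simpa using (le_abs_self _).trans (hC (Real.exp_ne_zero (c * s)))) m
    have hWnonneg : 0 ≤ ∫ y in a..b, W y := intervalIntegral.integral_nonneg hab fun y _ => by
      positivity
    push_cast
    calc (⌊(∫ y in a..b, W y) / ε⌋₊ : ℝ) + 1 + 1 ≤ (∫ y in a..b, W y) / ε + 2 := by
          linarith [Nat.floor_le (div_nonneg hWnonneg hε.le)]
      _ ≤ ((b - a) + C / (Real.exp c - 1)) * Real.exp (c * m) / ε + 2 * Real.exp (c * m) := by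
          gcongr
          linarith
      _ = _ := by ring

end DynamicalGrids

/-! ### Polynomial approximation of disks -/

section DiskApproximation

open MvPolynomial

theorem norm_sub_sum_iteratedFDeriv_le {E F : Type*} [NormedAddCommGroup E] [NormedSpace ℝ E]
    [NormedAddCommGroup F] [NormedSpace ℝ F] [CompleteSpace F] {f : E → F} {x y : E} {n : ℕ} {C : ℝ}
    (hf : ∀ t ∈ Icc (0 : ℝ) 1, ContDiffAt ℝ (n + 1) f (x + t • y))
    (hC : ∀ t ∈ Icc (0 : ℝ) 1, ‖iteratedFDeriv ℝ (n + 1) f (x + t • y)‖ ≤ C) :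
    ‖f (x + y) - ∑ i ∈ Finset.range (n + 1), (i.factorial : ℝ)⁻¹ •
      iteratedFDeriv ℝ i f x fun _ => y‖ ≤ C * ‖y‖ ^ (n + 1) / n.factorial := by
  have hremainder : ∀ t ∈ uIoc (0 : ℝ) 1,
      ‖(1 - t) ^ n • iteratedFDeriv ℝ (n + 1) f (x + t • y) fun _ => y‖ ≤ C * ‖y‖ ^ (n + 1) := by
    intro t ht
    rw [uIoc_of_le zero_le_one] at ht
    calc _ ≤ 1 * ‖iteratedFDeriv ℝ (n + 1) f (x + t • y) fun _ => y‖ := by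
          rw [norm_smul]
          gcongr
          rw [norm_pow, Real.norm_of_nonneg (sub_nonneg.2 ht.2)]
          exact pow_le_one₀ (sub_nonneg.2 ht.2) (sub_le_self _ ht.1.le)
      _ ≤ C * ‖y‖ ^ (n + 1) := by
          rw [one_mul]
          simpa using ContinuousMultilinearMap.le_of_opNorm_le (hC t (Ioc_subset_Icc_self ht))
            fun _ => y
  rw [map_add_eq_sum_add_integral_iteratedFDeriv hf, add_sub_cancel_left, norm_smul, norm_inv,
    Real.norm_natCast, inv_mul_eq_div]
  gcongr
  simpa using intervalIntegral.norm_integral_le_of_norm_le_const hremainder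

theorem exists_mvPolynomial_eval_repr_eq {R V ι : Type*} [CommSemiring R] [AddCommMonoid V]
    [Module R V] [Finite ι] (b : Module.Basis ι R V) {i : ℕ}
    (M : MultilinearMap R (fun _ : Fin i => V) R) :
    ∃ p : MvPolynomial ι R, p.totalDegree ≤ i ∧ ∀ v, eval (b.repr v) p = M fun _ => v := by
  classical
  have := Fintype.ofFinite ι
  refine ⟨∑ r : Fin i → ι, C (M fun l => b (r l)) * ∏ l, X (r l),
    totalDegree_finsetSum_le fun r _ => ?_, fun v => ?_⟩
  · refine (totalDegree_mul _ _).trans ?_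
    rw [totalDegree_C, zero_add]
    refine (totalDegree_finsetProd _ _).trans ?_
    have hX : ∀ l ∈ Finset.univ, (X (r l) : MvPolynomial ι R).totalDegree ≤ 1 := fun l _ =>
      (totalDegree_monomial_le _ _).trans (by simp)
    simpa using Finset.sum_le_card_nsmul _ _ 1 hX
  · conv_rhs => rw [← b.sum_repr v]
    simp only [map_sum, map_mul, eval_C, map_prod, eval_X, M.map_sum, M.map_smul_univ, smul_eq_mul,
      mul_comm]

theorem euclideanSpace_norm_le_sum {ι : Type*} [Fintype ι] (x : EuclideanSpace ℝ ι) :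
    ‖x‖ ≤ ∑ i, |x i| := by
  classical
  conv_lhs => rw [← (EuclideanSpace.basisFun ι ℝ).sum_repr x]
  exact (norm_sum_le _ _).trans_eq (by simp [norm_smul])

theorem exists_mvPolynomial_abs_sub_le {k n d : ℕ} {φ : Euc k → Euc n} {C : ℝ}
    (hφ : ∀ t ∈ unitCube k, ContDiffAt ℝ (d + 1) φ t)
    (hC : ∀ t ∈ unitCube k, ‖iteratedFDeriv ℝ (d + 1) φ t‖ ≤ C) :
    ∃ P : Fin n → MvPolynomial (Fin k) ℝ, (∀ j, (P j).totalDegree ≤ d) ∧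
      ∀ t ∈ unitCube k, ∀ j, |φ t j - eval t (P j)| ≤ C * k ^ (d + 1) / d.factorial := by
  have hstar : ∀ t ∈ unitCube k, ∀ τ ∈ Icc (0 : ℝ) 1, 0 + τ • t ∈ unitCube k := by
    intro t ht τ hτ i
    simpa [abs_mul, abs_of_nonneg hτ.1] using mul_le_one₀ hτ.2 (abs_nonneg _) (ht i)
  choose p hpdeg hp using fun i j => exists_mvPolynomial_eval_repr_eq
    (EuclideanSpace.basisFun (Fin k) ℝ).toBasis
    ((EuclideanSpace.proj j).toLinearMap.compMultilinearMap
      (iteratedFDeriv ℝ i φ 0).toMultilinearMap)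
  refine ⟨fun j => ∑ i ∈ Finset.range (d + 1), MvPolynomial.C (i.factorial : ℝ)⁻¹ * p i j,
    fun j => totalDegree_finsetSum_le fun i hi => ?_, fun t ht j => ?_⟩
  · refine (totalDegree_mul _ _).trans ?_
    rw [totalDegree_C, zero_add]
    exact (hpdeg i j).trans (Finset.mem_range_succ_iff.1 hi)
  · have hC0 : 0 ≤ C := (norm_nonneg _).trans (hC t ht)
    have hnorm : ‖t‖ ≤ k := (euclideanSpace_norm_le_sum t).trans
      ((Finset.sum_le_card_nsmul _ _ 1 fun i _ => ht i).trans_eq (by simp))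
    have htaylor := norm_sub_sum_iteratedFDeriv_le (x := 0) (y := t) (n := d)
      (fun τ hτ => hφ _ (hstar t ht τ hτ)) fun τ hτ => hC _ (hstar t ht τ hτ)
    rw [zero_add] at htaylor
    calc |φ t j - eval t (∑ i ∈ Finset.range (d + 1), MvPolynomial.C (i.factorial : ℝ)⁻¹ * p i j)|
        = ‖(φ t - ∑ i ∈ Finset.range (d + 1), (i.factorial : ℝ)⁻¹ •
            iteratedFDeriv ℝ i φ 0 fun _ => t) j‖ := by
          have hpt : ∀ i, eval t (p i j) = (iteratedFDeriv ℝ i φ 0 fun _ => t) j :=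
            fun i => hp i j t
          simp [hpt, Finset.sum_apply]
      _ ≤ C * ‖t‖ ^ (d + 1) / d.factorial := (PiLp.norm_apply_le _ j).trans htaylor
      _ ≤ C * k ^ (d + 1) / d.factorial := by gcongr

theorem exists_affine_mem_Icc {a b η : ℝ} (hab : a ≤ b) (hη : 0 < η) :
    ∃ u v : ℝ, ∀ x ∈ Icc a b, ∀ y, |x - y| ≤ η →
      u * y + v ∈ Icc a b ∧ |x - (u * y + v)| ≤ 2 * η := by
  have hpos : 0 < b - a + 2 * η := by linarith
  -- the affine bijection from `[a - η, b + η]` onto `[a, b]`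
  set u := (b - a) / (b - a + 2 * η)
  have hu : u * (b - a + 2 * η) = b - a := div_mul_cancel₀ _ hpos.ne'
  have hu0 : 0 ≤ u := div_nonneg (by linarith) hpos.le
  have hu1 : u ≤ 1 := div_le_one_of_le₀ (by linarith) hpos.le
  refine ⟨u, a - u * (a - η), fun x hx y hxy => ?_⟩
  rw [abs_le] at hxy ⊢
  have hlow : 0 ≤ y - (a - η) := by linarith [hx.1]
  have hupp : 0 ≤ b + η - y := by linarith [hx.2]
  refine ⟨⟨?_, ?_⟩, ?_, ?_⟩ <;>
    nlinarith [mul_nonneg hu0 hlow, mul_nonneg hu0 hupp, mul_nonneg (sub_nonneg.2 hu1) hlow,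
      mul_nonneg (sub_nonneg.2 hu1) hupp]

theorem exists_mvPolynomial_mem_Icc {k n d : ℕ} {φ : Euc k → Euc n} {C η : ℝ}
    (hφ : ∀ t ∈ unitCube k, ContDiffAt ℝ (d + 1) φ t)
    (hC : ∀ t ∈ unitCube k, ‖iteratedFDeriv ℝ (d + 1) φ t‖ ≤ C) {a b : Fin n → ℝ} (hab : a ≤ b)
    (hφI : ∀ t ∈ unitCube k, ∀ j, φ t j ∈ Icc (a j) (b j)) (hη : 0 < η)
    (hd : C * k ^ (d + 1) / d.factorial ≤ η) :
    ∃ Q : Fin n → MvPolynomial (Fin k) ℝ, (∀ j, (Q j).totalDegree ≤ d) ∧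
      ∀ t ∈ unitCube k, ∀ j,
        eval t (Q j) ∈ Icc (a j) (b j) ∧ |φ t j - eval t (Q j)| ≤ 2 * η := by
  obtain ⟨P, hPdeg, hP⟩ := exists_mvPolynomial_abs_sub_le hφ hC
  choose u v huv using fun j => exists_affine_mem_Icc (hab j) hη
  refine ⟨fun j => MvPolynomial.C (u j) * P j + MvPolynomial.C (v j), fun j => ?_,
    fun t ht j => ?_⟩
  · refine (totalDegree_add _ _).trans (max_le ((totalDegree_mul _ _).trans ?_) (by simp))
    simpa using hPdeg j
  · simpa using huv j _ (hφI t ht j) _ ((hP t ht j).trans hd)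

theorem exists_forall_pow_div_factorial_le {R L ε : ℝ} (hR : 0 ≤ R) (hL : 1 ≤ L) (hε : 0 < ε) :
    ∃ m₀ : ℕ, ∀ m : ℕ, R ^ (m + m₀ + 1) / (m + m₀).factorial ≤ ε / L ^ m := by
  have hlim : Tendsto (fun d : ℕ => R * ((L * R) ^ d / d.factorial)) atTop (𝓝 0) := by
    simpa using (FloorSemiring.tendsto_pow_div_factorial_atTop (L * R)).const_mul R
  obtain ⟨m₀, hm₀⟩ := eventually_atTop.1 (hlim.eventually_le_const hε)
  refine ⟨m₀, fun m => ?_⟩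
  rw [le_div_iff₀ (by positivity)]
  calc R ^ (m + m₀ + 1) / (m + m₀).factorial * L ^ m
      ≤ R ^ (m + m₀ + 1) / (m + m₀).factorial * L ^ (m + m₀) := by
        gcongr
        exact Nat.le_add_right _ _
    _ = R * ((L * R) ^ (m + m₀) / (m + m₀).factorial) := by ring
    _ ≤ ε := hm₀ _ (Nat.le_add_left _ _)

end DiskApproximation

section DiskEntropy

open Dynamics MvPolynomial

theorem lipschitzOnWith_iterate {α : Type*} [PseudoEMetricSpace α] {f : α → α} {s : Set α}
    {L : ℝ≥0} (hf : LipschitzOnWith L f s) (hmaps : MapsTo f s s) :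
    ∀ n, LipschitzOnWith (L ^ n) f^[n] s
  | 0 => by simpa using LipschitzWith.id.lipschitzOnWith
  | n + 1 => by
    rw [pow_succ, Function.iterate_succ]
    exact (lipschitzOnWith_iterate hf hmaps n).comp hf hmaps

theorem dist_iterate_le_sum {ι : Type*} [Fintype ι] {f : ι → ℝ → ℝ}
    {K : Set (EuclideanSpace ℝ ι)} {F : K → K}
    (hF : ∀ (x : K) i, (F x : EuclideanSpace ℝ ι) i = f i ((x : EuclideanSpace ℝ ι) i))
    (s : ℕ) (x y : K) :
    dist (F^[s] x) (F^[s] y) ≤ ∑ i, |(f i)^[s] (x.1 i) - (f i)^[s] (y.1 i)| := by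
  have hcoord : ∀ (x : K) i, (F^[s] x).1 i = (f i)^[s] (x.1 i) := fun x i =>
    (Function.Semiconj.iterate_right (f := fun x : K => x.1 i) (fun x => hF x i) s) x
  rw [Subtype.dist_eq, dist_eq_norm]
  simpa [hcoord] using euclideanSpace_norm_le_sum ((F^[s] x).1 - (F^[s] y).1)

theorem exists_card_le_forall_eval_mem_gridCell {k d M T : ℕ} {D : Set (Fin k → ℝ)}
    {Q : Fin (k + 1) → MvPolynomial (Fin k) ℝ} (hQ : ∀ j, (Q j).totalDegree ≤ d)
    {p : Fin (k + 1) → ℕ → ℝ} (hp : ∀ j, StrictMono (p j)) {N : Fin (k + 1) → ℕ}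
    (hcover : ∀ t ∈ D, ∀ j, ∃ l < N j, eval t (Q j) ∈ Icc (p j l) (p j (l + 1)))
    (hT : ∀ i, ∏ j ∈ Finset.univ.erase i, (N j + 1) ≤ T)
    (hM : CellCountBound (k + 1) ((k + 1) * ((k + 1) * d + 1) ^ k) M) :
    ∃ B : Finset (Fin (k + 1) → ℕ), B.card ≤ M * T ∧
      ∀ t ∈ D, ∃ v ∈ B, (fun j => eval t (Q j)) ∈ gridCell p v := by
  classical
  obtain ⟨G, hGdeg, hG0, hGQ⟩ := exists_ne_zero_aeval_eq_zero_fin hQ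
  refine ⟨(Fintype.piFinset fun j => Finset.range (N j)).filter
    fun v => ∃ x ∈ gridCell p v, eval x G = 0, ?_, fun t ht => ?_⟩
  · refine hM G hG0 (by simpa using totalDegree_le_of_mem_restrictDegree hGdeg) p hp N T hT _
      (fun v hv i => ?_) fun v hv => (Finset.mem_filter.1 hv).2
    exact Finset.mem_range.1 (Fintype.mem_piFinset.1 (Finset.mem_filter.1 hv).1 i)
  · choose v hvN hv using hcover t ht
    have hcell : (fun j => eval t (Q j)) ∈ gridCell p v := ⟨fun j => (hv j).1, fun j => (hv j).2⟩
    refine ⟨v, Finset.mem_filter.2 ⟨by simpa [Fintype.mem_piFinset] using hvN, _, hcell, ?_⟩,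
      hcell⟩
    rw [← eval_aeval, hGQ, map_zero]

theorem coverNum_le_of_polynomial_approx {k d m M T : ℕ} {f : Fin (k + 1) → ℝ → ℝ}
    {K : Set (Euc (k + 1))} {F : K → K} (hF : ∀ (x : K) i, (F x).1 i = f i (x.1 i))
    {φ : Euc k → Euc (k + 1)} {D : Set (Euc k)} {Q : Fin (k + 1) → MvPolynomial (Fin k) ℝ}
    (hQ : ∀ j, (Q j).totalDegree ≤ d) {S : Fin (k + 1) → Set ℝ}
    (hQS : ∀ t ∈ D, ∀ j, eval t (Q j) ∈ S j) {ε ε' : ℝ}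
    (hclose : ∀ t ∈ D, ∀ j, ∀ s < m, |(f j)^[s] (φ t j) - (f j)^[s] (eval t (Q j))| ≤ ε)
    {p : Fin (k + 1) → ℕ → ℝ} {N : Fin (k + 1) → ℕ}
    (hgrid : ∀ j, IsDynamicalGrid (f j) (S j) ε m (p j) (N j))
    (hT : ∀ i, ∏ j ∈ Finset.univ.erase i, (N j + 1) ≤ T)
    (hM : CellCountBound (k + 1) ((k + 1) * ((k + 1) * d + 1) ^ k) M)
    (hε' : (k + 1) * (3 * ε) < ε') :
    coverNum F ε' m {x : K | ∃ t ∈ D, φ t = x} ≤ (M * T : ℕ) := by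
  obtain ⟨B, hBcard, hB⟩ := exists_card_le_forall_eval_mem_gridCell (D := WithLp.ofLp '' D) hQ
    (fun j => (hgrid j).strictMono)
    (forall_mem_image.2 fun t ht j => (hgrid j).exists_mem_Icc _ (hQS t ht j)) hT hM
  have hparam : ∀ x : K, (∃ t ∈ D, φ t = x) → ∃ t ∈ D, φ t = x ∧
      ∃ v ∈ B, (fun j => eval t (Q j)) ∈ gridCell p v := fun x ⟨t, ht, hx⟩ =>
    ⟨t, ht, hx, hB _ (mem_image_of_mem _ ht)⟩
  choose! param hparamD hparam cell hcellB hcell using hparam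
  refine (coverNum_le_card_of_coloring (col := cell) hcellB fun x hx y hy hxy s hs => ?_).trans
    (by exact_mod_cast hBcard)
  have hcoord : ∀ i, |(f i)^[s] (x.1 i) - (f i)^[s] (y.1 i)| ≤ 3 * ε := by
    intro i
    have hx' := hclose _ (hparamD x hx) i s hs
    have hy' := hclose _ (hparamD y hy) i s hs
    have hcellx := hcell x hx
    rw [hxy] at hcellx
    have hmid := (hgrid i).abs_iterate_sub_le _ _ ⟨hcellx.1 i, hcellx.2 i⟩ _
      ⟨(hcell y hy).1 i, (hcell y hy).2 i⟩ s hs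
    rw [hparam x hx] at hx'
    rw [hparam y hy] at hy'
    rw [abs_le] at hmid hx' hy' ⊢
    constructor <;> linarith
  refine ((dist_iterate_le_sum hF s x y).trans (Finset.sum_le_sum fun i _ => hcoord i)).trans_lt ?_
  simpa using hε'

theorem exists_forall_coverNum_le_of_mem_cubeFamily {k : ℕ} {f : Fin (k + 1) → ℝ → ℝ}
    {a b : Fin (k + 1) → ℝ} (hab : a ≤ b)
    (hmaps : ∀ i, MapsTo (f i) (Icc (a i) (b i)) (Icc (a i) (b i)))
    {L : ℝ≥0} (hL : 1 ≤ L) (hf : ∀ i, LipschitzOnWith L (f i) (Icc (a i) (b i)))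
    {K : Set (Euc (k + 1))} (hK : ∀ x ∈ K, ∀ i, x i ∈ Icc (a i) (b i)) {F : K → K}
    (hF : ∀ (x : K) i, (F x).1 i = f i (x.1 i)) {ε ε' : ℝ} (hε : 0 < ε)
    (hε' : (k + 1) * (3 * ε) < ε') :
    ∃ m₀ : ℕ, ∀ m M T : ℕ, ∀ S ∈ cubeFamily (k + 1) k K,
      ∀ (p : Fin (k + 1) → ℕ → ℝ) (N : Fin (k + 1) → ℕ),
      (∀ j, IsDynamicalGrid (f j) (Icc (a j) (b j)) ε m (p j) (N j)) →
      (∀ i, ∏ j ∈ Finset.univ.erase i, (N j + 1) ≤ T) →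
      CellCountBound (k + 1) ((k + 1) * ((k + 1) * (m + m₀ : ℕ) + 1) ^ k) M →
      coverNum F ε' m S ≤ (M * T : ℕ) := by
  obtain ⟨m₀, hm₀⟩ := exists_forall_pow_div_factorial_le (R := k) (L := L) k.cast_nonneg
    (by exact_mod_cast hL) (half_pos hε)
  refine ⟨m₀, ?_⟩
  rintro m M T _ ⟨φ, ⟨U, hU, hcU, hφU⟩, hder, hφK, rfl⟩ p N hgrid hT hM
  have hφI : ∀ t ∈ unitCube k, ∀ j, φ t j ∈ Icc (a j) (b j) := fun t ht => hK _ (hφK t ht)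
  have hLm : (0 : ℝ) < L ^ m := pow_pos (one_pos.trans_le (by exact_mod_cast hL)) m
  obtain ⟨Q, hQdeg, hQ⟩ := exists_mvPolynomial_mem_Icc (d := m + m₀) (C := 1)
    (η := ε / 2 / L ^ m)
    (fun t ht => (hφU.contDiffAt (hU.mem_nhds (hcU ht))).of_le (by exact_mod_cast le_top))
    (fun t ht => hder _ (by simp) t ht) hab hφI
    (div_pos (half_pos hε) hLm) (by simpa using hm₀ m)
  refine coverNum_le_of_polynomial_approx hF hQdeg (fun t ht j => (hQ t ht j).1)
    (fun t ht j s hs => ?_) hgrid hT hM hε'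
  calc |(f j)^[s] (φ t j) - (f j)^[s] (eval t (Q j))|
      ≤ L ^ s * |φ t j - eval t (Q j)| := by
        simpa [Real.dist_eq] using (lipschitzOnWith_iterate (hf j) (hmaps j) s).dist_le_mul _
          (hφI t ht j) _ (hQ t ht j).1
    _ ≤ L ^ m * (2 * (ε / 2 / L ^ m)) := by
        gcongr
        exact (hQ t ht j).2
    _ = ε := by field_simp

theorem exists_eval_natCast_le_mul_exp (P : Polynomial ℝ) {δ : ℝ} (hδ : 0 < δ) :
    ∃ C : ℝ, ∀ m : ℕ, P.eval (m : ℝ) ≤ C * Real.exp (δ * m) := by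
  have hlim : Tendsto (fun m : ℕ => P.eval (m : ℝ) / Real.exp (δ * m)) atTop (𝓝 0) := by
    have h := ((P.comp (Polynomial.C δ⁻¹ * Polynomial.X)).tendsto_div_exp_atTop).comp
      (tendsto_natCast_atTop_atTop.const_mul_atTop hδ)
    simpa [Function.comp_def, hδ.ne'] using h
  obtain ⟨C, hC⟩ := hlim.bddAbove_range
  exact ⟨C, fun m => (div_le_iff₀ (Real.exp_pos _)).1 (hC (mem_range_self m))⟩

theorem sum_prod_erase_le_mul_exp {ι : Type*} [Fintype ι] [DecidableEq ι] {c C u : ι → ℝ} {x : ℝ}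
    (hx : 0 ≤ x) (hu0 : 0 ≤ u) (hu : ∀ j, u j ≤ C j * Real.exp (c j * x)) {i₀ : ι}
    (hi₀ : ∀ i, c i₀ ≤ c i) :
    ∑ i, ∏ j ∈ Finset.univ.erase i, u j ≤
      (∑ i, ∏ j ∈ Finset.univ.erase i, C j) *
        Real.exp ((∑ j ∈ Finset.univ.erase i₀, c j) * x) := by
  have hC : ∀ j, 0 ≤ C j := fun j =>
    nonneg_of_mul_nonneg_left ((hu0 j).trans (hu j)) (Real.exp_pos _)
  have hsum : ∀ i, ∑ j ∈ Finset.univ.erase i, c j ≤ ∑ j ∈ Finset.univ.erase i₀, c j := fun i => by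
    linarith [hi₀ i, Finset.add_sum_erase Finset.univ c (Finset.mem_univ i),
      Finset.add_sum_erase Finset.univ c (Finset.mem_univ i₀)]
  rw [Finset.sum_mul]
  refine Finset.sum_le_sum fun i _ => ?_
  calc ∏ j ∈ Finset.univ.erase i, u j
      ≤ ∏ j ∈ Finset.univ.erase i, (C j * Real.exp (c j * x)) :=
        Finset.prod_le_prod (fun j _ => hu0 j) fun j _ => hu j
    _ = (∏ j ∈ Finset.univ.erase i, C j) * Real.exp ((∑ j ∈ Finset.univ.erase i, c j) * x) := by
        rw [Finset.prod_mul_distrib, Finset.sum_mul, Real.exp_sum]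
    _ ≤ _ := by
        have hprod := Finset.prod_nonneg (s := Finset.univ.erase i) fun j _ => hC j
        gcongr _ * Real.exp (?_ * x)
        exact hsum i

theorem exists_common_lipschitzOnWith {ι : Type*} [Finite ι] {f : ι → ℝ → ℝ}
    (hf : ∀ i, ContDiff ℝ 1 (f i)) (a b : ι → ℝ) :
    ∃ L : ℝ≥0, 1 ≤ L ∧ ∀ i, LipschitzOnWith L (f i) (Icc (a i) (b i)) := by
  have := Fintype.ofFinite ι
  choose L hL using fun i => (hf i).contDiffOn.exists_lipschitzOnWith one_ne_zero
    (convex_Icc (a i) (b i)) isCompact_Icc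
  refine ⟨1 + ∑ i, L i, le_self_add, fun i => (hL i).weaken ?_⟩
  exact (Finset.single_le_sum (f := L) (fun _ _ => zero_le) (Finset.mem_univ i)).trans
    le_add_self

theorem HkCube_le_sum_erase_add {k : ℕ} {f : Fin (k + 1) → ℝ → ℝ} {a b : Fin (k + 1) → ℝ}
    (hab : a ≤ b) (hf : ∀ i, ContDiff ℝ (⊤ : ℕ∞) (f i))
    (hmaps : ∀ i, MapsTo (f i) (Icc (a i) (b i)) (Icc (a i) (b i))) {c : Fin (k + 1) → ℝ}
    (hc : ∀ i, 0 < c i) (hent : ∀ i, coverEntropy (f i) (Icc (a i) (b i)) < c i)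
    {i₀ : Fin (k + 1)} (hi₀ : ∀ i, c i₀ ≤ c i) {K : Set (Euc (k + 1))}
    (hK : ∀ x ∈ K, ∀ i, x i ∈ Icc (a i) (b i)) {F : K → K}
    (hF : ∀ (x : K) i, (F x).1 i = f i (x.1 i)) {δ : ℝ} (hδ : 0 < δ) :
    HkCube (k + 1) k F ≤ (∑ j ∈ Finset.univ.erase i₀, c j + δ : ℝ) := by
  refine unifEntColl_le (add_nonneg (Finset.sum_nonneg fun j _ => (hc j).le) hδ.le)
    fun ε' hε' => ?_
  obtain ⟨ε, hε, hεε'⟩ : ∃ ε > 0, (k + 1) * (3 * ε) < ε' :=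
    ⟨ε' / (6 * (k + 1)), by positivity, by field_simp; norm_num⟩
  obtain ⟨L, hL1, hL⟩ := exists_common_lipschitzOnWith (fun i => (hf i).of_le (by simp)) a b
  obtain ⟨m₀, hcover⟩ :=
    exists_forall_coverNum_le_of_mem_cubeFamily hab hmaps hL1 hL hK hF hε hεε'
  choose C hC using fun i => exists_isDynamicalGrid (hf i) (hab i) (hmaps i) (hc i) (hent i) hε
  choose p N hgrid hN using hC
  obtain ⟨A, q, hA⟩ := exists_cellCountBound (k + 1)
  obtain ⟨D, hD⟩ := exists_eval_natCast_le_mul_exp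
    (A * ((k + 1) * ((k + 1) * ((Polynomial.X : Polynomial ℝ) + m₀) + 1) ^ k + 1) ^ q) hδ
  refine ⟨D * ∑ i, ∏ j ∈ Finset.univ.erase i, C j, fun m S hS =>
    ⟨_, hcover m _ (∑ i, ∏ j ∈ Finset.univ.erase i, (N j m + 1)) S hS _ _ (fun j => hgrid j m)
      (fun i => Finset.single_le_sum (f := fun i => ∏ j ∈ Finset.univ.erase i, (N j m + 1))
        (fun _ _ => Nat.zero_le _) (Finset.mem_univ i)) (hA _), ?_⟩⟩
  have hcells := sum_prod_erase_le_mul_exp (u := fun j => (N j m : ℝ) + 1) m.cast_nonneg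
    (fun j => by positivity) (fun j => hN j m) hi₀
  have hdegree := hD m
  simp only [Polynomial.eval_mul, Polynomial.eval_pow, Polynomial.eval_add, Polynomial.eval_X,
    Polynomial.eval_natCast, Polynomial.eval_one] at hdegree
  have hD0 := le_trans (by positivity) hdegree
  push_cast
  refine (mul_le_mul hdegree hcells (by positivity) hD0).trans_eq ?_
  rw [add_mul, Real.exp_add]
  ring

theorem HkCube_le_sum_erase {k : ℕ} {f : Fin (k + 1) → ℝ → ℝ} {a b : Fin (k + 1) → ℝ}
    (hab : a ≤ b) (hf : ∀ i, ContDiff ℝ (⊤ : ℕ∞) (f i))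
    (hmaps : ∀ i, MapsTo (f i) (Icc (a i) (b i)) (Icc (a i) (b i))) {h : Fin (k + 1) → ℝ}
    (hh : ∀ i, 0 ≤ h i) (hent : ∀ i, coverEntropy (f i) (Icc (a i) (b i)) ≤ h i)
    {i₀ : Fin (k + 1)} (hi₀ : ∀ i, h i₀ ≤ h i) {K : Set (Euc (k + 1))}
    (hK : ∀ x ∈ K, ∀ i, x i ∈ Icc (a i) (b i)) {F : K → K}
    (hF : ∀ (x : K) i, (F x).1 i = f i (x.1 i)) :
    HkCube (k + 1) k F ≤ (∑ j ∈ Finset.univ.erase i₀, h j : ℝ) := by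
  refine EReal.le_of_forall_lt_iff_le.1 fun z hz => ?_
  set δ := (z - ∑ j ∈ Finset.univ.erase i₀, h j) / (k + 1)
  have hδ : 0 < δ := div_pos (sub_pos.2 (EReal.coe_lt_coe_iff.1 hz)) (by positivity)
  have hsum : ∑ j ∈ Finset.univ.erase i₀, (h j + δ) + δ = z := by
    have hmul : (k + 1) * δ = z - ∑ j ∈ Finset.univ.erase i₀, h j :=
      mul_div_cancel₀ _ (by positivity)
    simp only [Finset.sum_add_distrib, Finset.sum_const, Finset.card_erase_of_mem,
      Finset.mem_univ, Finset.card_univ, Fintype.card_fin, Nat.add_sub_cancel, nsmul_eq_mul]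
    linarith
  rw [← hsum]
  refine HkCube_le_sum_erase_add hab hf hmaps (fun i => add_pos_of_nonneg_of_pos (hh i) hδ)
    (fun i => (hent i).trans_lt ?_) (fun i => by linarith [hi₀ i]) hK hF hδ
  exact_mod_cast lt_add_of_pos_right (h i) hδ

end DiskEntropy

section ProductOfIntervalMaps

open Dynamics

theorem htop_restrict_lt_top {f : ℝ → ℝ} (hf : ContDiff ℝ 1 f) {a b : ℝ} (hab : a ≤ b)
    (hmaps : MapsTo f (Icc a b) (Icc a b)) : htop (hmaps.restrict f (Icc a b) (Icc a b)) < ⊤ := by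
  obtain ⟨L, hL⟩ := hf.contDiffOn.exists_lipschitzOnWith one_ne_zero (convex_Icc a b) isCompact_Icc
  exact (htop_le_log_of_lipschitzWith hab (le_max_right L 1)
    ((hL.weaken (le_max_left L 1)).mapsToRestrict hmaps)).trans_lt (EReal.coe_lt_top _)

theorem exists_coverEntropy_eq_coe {f : ℝ → ℝ} (hf : ContDiff ℝ 1 f) {a b : ℝ} (hab : a ≤ b)
    (hmaps : MapsTo f (Icc a b) (Icc a b))
    (hpos : 0 < htop (hmaps.restrict f (Icc a b) (Icc a b))) :
    ∃ h : ℝ, 0 < h ∧ coverEntropy f (Icc a b) = h := by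
  rw [← htop_restrict_eq_coverEntropy (nonempty_Icc.2 hab) hmaps]
  lift htop (hmaps.restrict f (Icc a b) (Icc a b)) to ℝ using
    ⟨(htop_restrict_lt_top hf hab hmaps).ne, (EReal.bot_lt_zero.trans hpos).ne'⟩ with h
  exact ⟨h, EReal.coe_pos.1 hpos, rfl⟩

theorem sum_le_htop_of_apply_eq {ι : Type*} [Fintype ι] {f : ι → ℝ → ℝ} {a b : ι → ℝ}
    (hab : a ≤ b) (hmaps : ∀ i, MapsTo (f i) (Icc (a i) (b i)) (Icc (a i) (b i))) {h : ι → ℝ}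
    (hent : ∀ i, h i ≤ coverEntropy (f i) (Icc (a i) (b i))) {K : Set (EuclideanSpace ℝ ι)}
    (hK : K = {x | ∀ i, x i ∈ Icc (a i) (b i)}) {F : K → K}
    (hF : ∀ (x : K) i, (F x).1 i = f i (x.1 i)) : ((∑ i, h i : ℝ) : EReal) ≤ htop F := by
  set coord : K → ι → ℝ := fun x => WithLp.ofLp x.1
  have hcoord : UniformContinuous coord :=
    (PiLp.lipschitzWith_ofLp 2 _).uniformContinuous.comp uniformContinuous_subtype_val
  have himage : coord '' univ = univ.pi fun i => Icc (a i) (b i) := by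
    subst hK
    ext x
    constructor
    · rintro ⟨y, -, rfl⟩ i -
      exact y.2 i
    · exact fun hx => ⟨⟨WithLp.toLp 2 x, fun i => hx i (mem_univ i)⟩, mem_univ _, rfl⟩
  have hsemiconj : Function.Semiconj coord F (Pi.map f) := fun x => funext (hF x)
  have : Nonempty K := by
    have : (coord '' univ).Nonempty :=
      himage ▸ univ_pi_nonempty_iff.2 fun i => nonempty_Icc.2 (hab i)
    exact this.of_image.to_subtype.map Subtype.val
  rw [htop_eq_coverEntropy]
  calc ((∑ i, h i : ℝ) : EReal) ≤ coverEntropy (Pi.map f) (univ.pi fun i => Icc (a i) (b i)) :=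
        sum_le_coverEntropy_pi hmaps hent
    _ ≤ coverEntropy F univ :=
        himage ▸ coverEntropy_image_le_of_uniformContinuous hsemiconj hcoord univ

end ProductOfIntervalMaps

/-- the Cartesian product of finitely many `C^∞` interval maps, each with
nonzero topological entropy, is entropy-expanding (`H^{n-1}_top(F) < h_top(F)`). -/
theorem stmt_13 (n : ℕ) (hn : 1 ≤ n) (a b : Fin n → ℝ) (hab : ∀ i, a i < b i)
    (f : Fin n → ℝ → ℝ) (hf : ∀ i, ContDiff ℝ (⊤ : ℕ∞) (f i))
    (hmaps : ∀ i, Set.MapsTo (f i) (Set.Icc (a i) (b i)) (Set.Icc (a i) (b i)))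
    -- each interval map has nonzero topological entropy:
    (hent : ∀ i, 0 < htop (fun x : Set.Icc (a i) (b i) =>
      (⟨f i (x : ℝ), hmaps i x.2⟩ : Set.Icc (a i) (b i))))
    (K : Set (Euc n)) (hK : K = {x : Euc n | ∀ i, x i ∈ Set.Icc (a i) (b i)})
    (F : ↥K → ↥K)
    (hF : ∀ (x : ↥K) (i : Fin n), ((F x : Euc n) i) = f i ((x : Euc n) i)) :
    HkCube n (n - 1) F < htop F := by
  obtain ⟨k, rfl⟩ := Nat.exists_eq_add_of_le' hn
  have hle : a ≤ b := fun i => (hab i).le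
  choose h hpos hh using fun i =>
    exists_coverEntropy_eq_coe ((hf i).of_le (by simp)) (hle i) (hmaps i) (hent i)
  obtain ⟨i₀, hi₀⟩ := Finite.exists_min h
  calc HkCube (k + 1) k F ≤ (∑ j ∈ Finset.univ.erase i₀, h j : ℝ) :=
        HkCube_le_sum_erase hle hf hmaps (fun i => (hpos i).le) (fun i => (hh i).le) hi₀
          (fun x hx => by rwa [hK] at hx) hF
    _ < (∑ j, h j : ℝ) := by
        rw [← Finset.add_sum_erase Finset.univ h (Finset.mem_univ i₀)]
        exact_mod_cast lt_add_of_pos_left _ (hpos i₀)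
    _ ≤ htop F := sum_le_htop_of_apply_eq hle hmaps (fun i => (hh i).ge) hK hF

end
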